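/- arXiv:0801.4194 — 2 statements merged into one kernel-verified Lean document; each statement's English description precedes it below -/
import Mathlib

section
/- Let T be a computable real number with 0 < T < 1. Then the series Z(T) = ∑_{p ∈ dom U} 2^{−|p|/T} and W(1,T) = ∑_{p ∈ dom U} |p|·2^{−|p|/T} both converge, Z(T) > 0, and the energy E(T) = W(1,T)/Z(T) is a left-computable real number which is Chaitin T-random and T-compressible. -/
open Filter

/-- A set of finite binary strings is prefix-free if no element of it is a
prefix of another (distinct) element of it. -/
def PrefixFree (S : Set (List Bool)) : Prop :=
  ∀ p ∈ S, ∀ q ∈ S, p <+: q → p = q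

/-- A computer: a partial recursive function from finite binary strings to
finite binary strings whose domain is a prefix-free set. -/
structure Computer where
  f : List Bool →. List Bool
  partrec : Partrec f
  prefixFree : PrefixFree {p | (f p).Dom}

/-- The domain of a computer. -/
def Computer.domain (C : Computer) : Set (List Bool) := {p | (C.f p).Dom}

/-- A computer `U` is optimal if every computer can be simulated on `U` with
only a constant increase in program length. -/
def IsOptimal (U : Computer) : Prop :=
  ∀ C : Computer, ∃ d : ℕ, ∀ p : List Bool, (C.f p).Dom →
    ∃ p' : List Bool, p'.length ≤ p.length + d ∧ ∀ s, s ∈ C.f p → s ∈ U.f p'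

/-- Program-size complexity `H(s)`: the minimal length of a program `p`
with `U(p) = s`. -/
noncomputable def H (U : Computer) (s : List Bool) : ℕ :=
  sInf {n | ∃ p : List Bool, p.length = n ∧ s ∈ U.f p}

/-- The `n`-th bit (`n ≥ 1`) of the base-two expansion of `x mod 1`
(the expansion chosen with infinitely many zeros). -/
noncomputable def binDigit (x : ℝ) (n : ℕ) : Bool :=
  decide (⌊Int.fract x * 2 ^ n⌋ % 2 = 1)

/-- The first `n` bits of the base-two expansion of `x mod 1` (with
infinitely many zeros). -/
noncomputable def bits (x : ℝ) (n : ℕ) : List Bool :=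
  (List.range n).map fun i => binDigit x (i + 1)

/-- A real `x` is weakly Chaitin `D`-random (w.r.t. the computer `U`). -/
def WeaklyChaitinRandom (U : Computer) (D x : ℝ) : Prop :=
  ∃ c : ℝ, ∀ n : ℕ, 1 ≤ n → D * n - c ≤ (H U (bits x n) : ℝ)

/-- A real `x` is Chaitin `D`-random (w.r.t. the computer `U`). -/
def ChaitinRandom (U : Computer) (D x : ℝ) : Prop :=
  Tendsto (fun n : ℕ => (H U (bits x n) : ℝ) - D * n) atTop atTop

/-- A real `x` is `D`-compressible (w.r.t. the computer `U`). -/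
def DCompressible (U : Computer) (D x : ℝ) : Prop :=
  Filter.limsup (fun n : ℕ => (H U (bits x n) : ℝ) / n) atTop ≤ D

/-- A computable real number. -/
def ComputableReal (T : ℝ) : Prop :=
  ∃ f : ℕ → ℚ, Computable f ∧ ∀ n : ℕ, 1 ≤ n → |T - (f n : ℝ)| < 1 / n

/-- A right-computable real number. -/
def RightComputable (T : ℝ) : Prop :=
  ∃ g : ℕ → ℚ, Computable g ∧ (∀ n, T ≤ (g n : ℝ)) ∧
    Tendsto (fun n => ((g n : ℚ) : ℝ)) atTop (nhds T)

/-- A left-computable real number. -/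
def LeftComputable (T : ℝ) : Prop := RightComputable (-T)

/-- The term `2 ^ (-|p| / T)` of the partition function `Z(T)`. -/
noncomputable def zterm (U : Computer) (T : ℝ) (p : U.domain) : ℝ :=
  (2 : ℝ) ^ (-((p : List Bool).length : ℝ) / T)

/-- The term `|p| ^ Q * 2 ^ (-|p| / T)` of `W(Q,T)`. -/
noncomputable def wterm (U : Computer) (Q T : ℝ) (p : U.domain) : ℝ :=
  ((p : List Bool).length : ℝ) ^ Q * (2 : ℝ) ^ (-((p : List Bool).length : ℝ) / T)

/-- The term `|p| * 2 ^ (-|p| / T)` of `W(1,T)`. -/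
noncomputable def wlterm (U : Computer) (T : ℝ) (p : U.domain) : ℝ :=
  ((p : List Bool).length : ℝ) * (2 : ℝ) ^ (-((p : List Bool).length : ℝ) / T)

/-- The term `|p| ^ 2 * 2 ^ (-|p| / T)` of `W(2,T)`. -/
noncomputable def wsqterm (U : Computer) (T : ℝ) (p : U.domain) : ℝ :=
  ((p : List Bool).length : ℝ) ^ 2 * (2 : ℝ) ^ (-((p : List Bool).length : ℝ) / T)

/-- A lower-computable function `f : ℕ⁺ → [0,∞)` (represented on `ℕ`,
with all conditions imposed on positive arguments). -/
def LowerComputableFun (f : ℕ → ℝ) : Prop :=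
  ∃ a : ℕ → ℕ → ℚ, Computable₂ a ∧
    (∀ k n : ℕ, 1 ≤ k → 1 ≤ n → (a k n : ℝ) ≤ f n) ∧
    (∀ n : ℕ, 1 ≤ n → Tendsto (fun k => ((a k n : ℚ) : ℝ)) atTop (nhds (f n)))

/-- A lower-computable semi-measure on finite binary strings. -/
def LowerComputableSemiMeasure (r : List Bool → ℝ) : Prop :=
  (∀ s, 0 ≤ r s) ∧ (∀ s, r s ≤ 1) ∧ Summable r ∧ (∑' s, r s) ≤ 1 ∧
    ∃ f : ℕ → List Bool → ℚ, Computable₂ f ∧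
      (∀ n s, ((f n s : ℚ) : ℝ) ≤ r s) ∧
      (∀ s, Tendsto (fun n => ((f n s : ℚ) : ℝ)) atTop (nhds (r s)))

/-- A universal probability. -/
def UniversalProbability (m : List Bool → ℝ) : Prop :=
  LowerComputableSemiMeasure m ∧
    ∀ r : List Bool → ℝ, LowerComputableSemiMeasure r →
      ∃ c : ℝ, 0 < c ∧ ∀ s, c * r s ≤ m s

/-!
Put `b = 2 ^ (-1 / T)`, so that `2 ^ (-|p| / T) = b ^ |p|` and `b < 1 / 2`; by Kraft's inequality
`∑ (1 / 2) ^ |p|` converges, and comparison with it gives the two convergence claims.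

Enumerating programs as they halt and rounding `b` outwards yields computable approximations `a k`
to `E` from below. Moving a program `p` with `|p| > 2 E + 1` into the sums raises the quotient by
at least a constant multiple of `(|p| + 1) * b ^ |p|`. This is what makes `E` random: from the first
`n` bits of `E` one finds `k` with `E - a k = O(2 ^ (-n))`, hence an output not produced by
any program enumerated up to `k`. Its shortest program has a length `l` with
`(l + 1) * b ^ l = O(2 ^ (-n))`, so that `l - T * n → ∞`, and `l ≤ H (bits E n) + O(1)`.

For compressibility, let `Ω = ∑ (1 / 2) ^ |p|`. Fix `P / N > T`, so that `β = 2 ^ (-N / P) > b`.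
The first `m` bits of `Ω` give a stage missing at most `2 ^ (-m)` of `Ω`; all missing programs then
have length at least `m`, and what they contribute to `E` is
`O(β ^ m) = O(2 ^ (-m * N / P))`. So about `n * P / N` bits of `Ω` and `O(n / N)` bits of
self-delimiting header suffice to compute `n` bits of `E`.
-/

section RationalCoding

open Encodable

theorem computable_of_computable_graph {α β : Type*} [Primcodable α] [Primcodable β]
    {f : α → β} {p : α × β → Bool} (hp : Computable p) (hpf : ∀ a b, p (a, b) ↔ b = f a) :
    Computable f := by
  have hsearch : Computable₂ fun (a : α) (n : ℕ) =>
      (decode n : Option β).bind fun b => bif p (a, b) then some b else none :=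
    Computable.option_bind (Computable.decode.comp Computable.snd)
      (Computable.cond (hp.comp ((Computable.fst.comp Computable.fst).pair Computable.snd))
        (Computable.option_some.comp Computable.snd) (Computable.const none))
  have hgraph (a : α) (n : ℕ) (b : β)
      (hb : b ∈ (decode n : Option β).bind fun b => bif p (a, b) then some b else none) :
      b = f a := by
    simp only [Option.mem_def, Option.bind_eq_some_iff, Bool.cond_eq_ite] at hb
    grind
  refine (Partrec.rfindOpt hsearch).of_eq_tot fun a => ?_
  have hdom : (Nat.rfindOpt fun n =>
      (decode n : Option β).bind fun b => bif p (a, b) then some b else none).Dom :=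
    Nat.rfindOpt_dom.2 ⟨encode (f a), f a, by simp [(hpf a (f a)).2 rfl]⟩
  obtain ⟨n, hn⟩ := Nat.rfindOpt_spec (Part.get_mem hdom)
  exact hgraph a n _ hn ▸ Part.get_mem hdom

theorem primrec_count {P : ℕ → Prop} [DecidablePred P] (hP : PrimrecPred P) :
    Primrec (Nat.count P) := by
  have hstep : Primrec₂ fun n c => if P n then c + 1 else c :=
    Primrec.ite (hP.comp Primrec.fst) (Primrec.succ.comp Primrec.snd) Primrec.snd
  refine (Primrec.nat_rec₁ 0 hstep).of_eq fun n => ?_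
  induction n with
  | zero => simp
  | succ n ih =>
    simp only [Nat.count_succ, ih]
    split_ifs <;> rfl

theorem primrecRel_coprime : PrimrecRel Nat.Coprime := by
  have hdvd : PrimrecRel fun (d : ℕ) (x : ℕ × ℕ) => x.1 % d = 0 ∧ x.2 % d = 0 → d = 1 := by
    have h₁ := Primrec.eq.comp (Primrec.nat_mod.comp
      (Primrec.fst.comp Primrec.snd) Primrec.fst) (Primrec.const (α := ℕ × ℕ × ℕ) 0)
    have h₂ := Primrec.eq.comp (Primrec.nat_mod.comp
      (Primrec.snd.comp Primrec.snd) Primrec.fst) (Primrec.const (α := ℕ × ℕ × ℕ) 0)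
    exact ((h₁.and h₂).not.or (Primrec.eq.comp Primrec.fst (Primrec.const 1))).of_eq
      fun x => imp_iff_not_or.symm
  have hall : PrimrecPred fun x : ℕ × ℕ =>
      ∀ d ∈ List.range (x.1 + x.2 + 1), x.1 % d = 0 ∧ x.2 % d = 0 → d = 1 :=
    (PrimrecRel.forall_mem_list hdvd).comp (Primrec.list_range.comp
      (Primrec.succ.comp (Primrec.nat_add.comp Primrec.fst Primrec.snd))) Primrec.id
  refine hall.of_eq fun ⟨m, n⟩ => ⟨fun h => ?_, fun h d _ ⟨hm, hn⟩ =>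
    Nat.eq_one_of_dvd_coprimes h (Nat.dvd_of_mod_eq_zero hm) (Nat.dvd_of_mod_eq_zero hn)⟩
  refine h (m.gcd n) (List.mem_range.2 ?_) ⟨Nat.mod_eq_zero_of_dvd (Nat.gcd_dvd_left m n),
    Nat.mod_eq_zero_of_dvd (Nat.gcd_dvd_right m n)⟩
  rcases Nat.eq_zero_or_pos m with rfl | hm
  · simp
  · have := Nat.gcd_le_left n hm
    omega

theorem encode_subtype_denumerable (s : Set ℕ) [DecidablePred (· ∈ s)] [Infinite s] (x : s) :
    @encode s (Nat.Subtype.denumerable s).toEncodable x = Nat.count (· ∈ s) x := by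
  let _ := Nat.Subtype.denumerable s
  have hs : (Set.ofPred (· ∈ s)).Infinite := Set.infinite_coe_iff.1 ‹_›
  obtain ⟨n, rfl⟩ := Nat.Subtype.ofNat_surjective x
  have hnth : (Nat.Subtype.ofNat s n : ℕ) = Nat.nth (· ∈ s) n := by
    rw [Nat.nth_apply_eq_orderIsoOfNat hs]
    have : ‹DecidablePred (· ∈ s)› = fun a => Classical.propDecidable (a ∈ Set.ofPred (· ∈ s)) :=
      Subsingleton.elim _ _
    subst this
    rfl
  rw [hnth, Nat.count_nth_of_infinite hs]
  exact Denumerable.encode_ofNat (α := s) n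

theorem half_encode_int_add_one (z : ℤ) : (encode z + 1) / 2 = z.natAbs := by
  rcases z with n | n
  · have : encode (Int.ofNat n) = 2 * n := rfl
    rw [this]
    simp only [Int.ofNat_eq_natCast, Int.natAbs_natCast]
    omega
  · have : encode (Int.negSucc n) = 2 * n + 1 := rfl
    simp only [this, Int.natAbs_negSucc]
    omega

theorem encode_int_mod_two_eq_one (z : ℤ) : encode z % 2 = 1 ↔ z < 0 := by
  rcases z with n | n
  · have : encode (Int.ofNat n) = 2 * n := rfl
    rw [this]
    simp only [Int.ofNat_eq_natCast]
    omega
  · have : encode (Int.negSucc n) = 2 * n + 1 := rfl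
    simp only [this, Int.negSucc_lt_zero, iff_true]
    omega

/-- The pair of numerator and denominator of a rational, as a natural number. Mathlib encodes `q` as
the index of `ratCode q` in the increasing enumeration of all such numbers. -/
def ratCode (q : ℚ) : ℕ := Nat.pair (encode q.num) q.den

theorem mem_range_ratCode {m : ℕ} :
    m ∈ Set.range ratCode ↔
      0 < m.unpair.2 ∧ Nat.Coprime ((m.unpair.1 + 1) / 2) m.unpair.2 := by
  constructor
  · rintro ⟨q, rfl⟩
    simpa only [ratCode, Nat.unpair_pair, half_encode_int_add_one] using ⟨q.den_pos, q.reduced⟩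
  · rintro ⟨hpos, hcop⟩
    rw [← Denumerable.encode_ofNat (α := ℤ) m.unpair.1, half_encode_int_add_one] at hcop
    refine ⟨⟨Denumerable.ofNat ℤ m.unpair.1, m.unpair.2, hpos.ne', hcop⟩, ?_⟩
    rw [ratCode, Denumerable.encode_ofNat, Nat.pair_unpair]

theorem primrecPred_mem_range_ratCode : PrimrecPred (· ∈ Set.range ratCode) := by
  have hfst : Primrec fun m : ℕ => m.unpair.1 := Primrec.fst.comp Primrec.unpair
  have hsnd : Primrec fun m : ℕ => m.unpair.2 := Primrec.snd.comp Primrec.unpair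
  exact ((Primrec.nat_lt.comp (Primrec.const 0) hsnd).and
    (primrecRel_coprime.comp (Primrec.nat_div.comp (Primrec.succ.comp hfst) (Primrec.const 2))
      hsnd)).of_eq fun m => mem_range_ratCode.symm

-- `Rat.instEncodable` also applies to `ℚ`, but is not the encoding that computability refers to.
theorem encode_rat [DecidablePred (· ∈ Set.range ratCode)] (q : ℚ) :
    @encode ℚ Primcodable.toEncodable q =
      Nat.count (· ∈ Set.range ratCode) (ratCode q) := by
  let _ := @decidableRangeEncode ℚ Rat.instEncodable
  have _ : Infinite (Set.range (@encode ℚ Rat.instEncodable)) :=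
    Set.infinite_coe_iff.2 (Set.infinite_range_of_injective (@encode_injective ℚ Rat.instEncodable))
  refine (encode_subtype_denumerable (Set.range (@encode ℚ Rat.instEncodable))
    (@equivRangeEncode ℚ Rat.instEncodable q)).trans ?_
  change Nat.count _ (ratCode q) = _
  congr 1

theorem computable_ratCode : Computable ratCode := by
  classical
  have hgraph : Primrec fun x : ℚ × ℕ =>
      decide (x.2 ∈ Set.range ratCode ∧ Nat.count (· ∈ Set.range ratCode) x.2 =
        @encode ℚ Primcodable.toEncodable x.1) :=
    ((primrecPred_mem_range_ratCode.comp Primrec.snd).and (Primrec.eq.comp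
      ((primrec_count primrecPred_mem_range_ratCode).comp Primrec.snd)
      (Primrec.encode.comp Primrec.fst))).decide
  refine computable_of_computable_graph hgraph.to_comp fun q m => ?_
  rw [decide_eq_true_iff]
  constructor
  · rintro ⟨hm, hcount⟩
    exact Nat.count_injective hm ⟨q, rfl⟩ (hcount.trans (encode_rat q))
  · rintro rfl
    exact ⟨⟨q, rfl⟩, (encode_rat q).symm⟩

theorem computable_rat_den : Computable Rat.den :=
  (Computable.snd.comp (Computable.unpair.comp computable_ratCode)).of_eq fun q => by
    simp [ratCode]

theorem computable_rat_num : Computable Rat.num :=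
  Computable.encode_iff.1 <|
    (Computable.fst.comp (Computable.unpair.comp computable_ratCode)).of_eq fun q => by
      simp [ratCode]

theorem primrec_int_natAbs : Primrec Int.natAbs :=
  (Primrec.nat_div.comp (Primrec.succ.comp Primrec.encode) (Primrec.const 2)).of_eq
    half_encode_int_add_one

theorem primrecPred_int_neg : PrimrecPred fun z : ℤ => z < 0 :=
  (Primrec.eq.comp (Primrec.nat_mod.comp Primrec.encode (Primrec.const 2))
    (Primrec.const 1)).of_eq encode_int_mod_two_eq_one

theorem primrec_int_toNat : Primrec Int.toNat :=
  (Primrec.ite primrecPred_int_neg (Primrec.const 0) primrec_int_natAbs).of_eq fun z => by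
    split_ifs <;> omega

theorem eq_neg_natCast_div_iff {q : ℚ} {m n : ℕ} (hn : 0 < n) :
    q = -(m / n : ℚ) ↔ q.num.toNat = 0 ∧ q.num.natAbs * n = m * q.den := by
  have hn' : (n : ℚ) ≠ 0 := by positivity
  have hden : (q.den : ℚ) ≠ 0 := by exact_mod_cast q.den_ne_zero
  have hcross : q = -(m / n : ℚ) ↔ q.num * n = -(m * q.den : ℤ) := by
    rw [← neg_div, ← @Int.cast_inj ℚ]
    nth_rw 1 [← Rat.num_div_den q]
    rw [div_eq_div_iff hden hn']
    push_cast
    rw [neg_mul]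
  rw [hcross, Int.toNat_eq_zero]
  constructor
  · intro h
    have hnum : q.num ≤ 0 := by
      by_contra! hpos
      have : 0 < q.num * n := by positivity
      have : (0 : ℤ) ≤ m * q.den := by positivity
      omega
    refine ⟨hnum, ?_⟩
    zify
    rw [abs_of_nonpos hnum]
    linarith
  · rintro ⟨hnum, h⟩
    zify at h
    rw [abs_of_nonpos hnum] at h
    linarith

theorem computable_neg_natCast_div {num den : ℕ → ℕ} (hnum : Computable num)
    (hden : Computable den) (hpos : ∀ k, 0 < den k) :
    Computable fun k => -(num k / den k : ℚ) := by
  have htest : PrimrecPred fun x : (ℕ × ℕ) × (ℤ × ℕ) =>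
      x.2.1.toNat = 0 ∧ x.2.1.natAbs * x.1.2 = x.1.1 * x.2.2 := by
    have hz : Primrec fun x : (ℕ × ℕ) × (ℤ × ℕ) => x.2.1 := Primrec.fst.comp Primrec.snd
    exact (Primrec.eq.comp (primrec_int_toNat.comp hz) (Primrec.const 0)).and
      (Primrec.eq.comp
        (Primrec.nat_mul.comp (primrec_int_natAbs.comp hz) (Primrec.snd.comp Primrec.fst))
        (Primrec.nat_mul.comp (Primrec.fst.comp Primrec.fst) (Primrec.snd.comp Primrec.snd)))
  have hdata : Computable fun x : ℕ × ℚ => ((num x.1, den x.1), (x.2.num, x.2.den)) :=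
    ((hnum.comp Computable.fst).pair (hden.comp Computable.fst)).pair
      ((computable_rat_num.comp Computable.snd).pair (computable_rat_den.comp Computable.snd))
  have hgraph := htest.decide.to_comp.comp hdata
  refine computable_of_computable_graph hgraph fun k q => ?_
  rw [decide_eq_true_iff, eq_neg_natCast_div_iff (hpos k)]

end RationalCoding

theorem primrec_pow : Primrec₂ ((· ^ ·) : ℕ → ℕ → ℕ) :=
  Primrec₂.unpaired'.1 Nat.Primrec.pow

theorem primrec_two_pow : Primrec fun k : ℕ => 2 ^ k :=
  primrec_pow.comp (Primrec.const 2) Primrec.id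

/-- A sequence of nonnegative rationals, viewed in `ℝ`, whose numerators and denominators can be
chosen computably. -/
def ComputableRatSeq (a : ℕ → ℝ) : Prop :=
  ∃ num den : ℕ → ℕ, Computable num ∧ Computable den ∧ ∀ k, 0 < den k ∧ a k = num k / den k

namespace ComputableRatSeq

variable {a b : ℕ → ℝ}

theorem nonneg (ha : ComputableRatSeq a) (k : ℕ) : 0 ≤ a k := by
  obtain ⟨num, den, -, -, h⟩ := ha
  rw [(h k).2]
  positivity

theorem comp (ha : ComputableRatSeq a) {g : ℕ → ℕ} (hg : Computable g) :
    ComputableRatSeq fun k => a (g k) := by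
  obtain ⟨num, den, hnum, hden, h⟩ := ha
  exact ⟨_, _, hnum.comp hg, hden.comp hg, fun k => h (g k)⟩

theorem div (ha : ComputableRatSeq a) (hb : ComputableRatSeq b) (hpos : ∀ k, 0 < b k) :
    ComputableRatSeq fun k => a k / b k := by
  obtain ⟨m, n, hm, hn, hmn⟩ := ha
  obtain ⟨r, s, hr, hs, hrs⟩ := hb
  refine ⟨fun k => m k * s k, fun k => n k * r k, Primrec.nat_mul.to_comp.comp hm hs,
    Primrec.nat_mul.to_comp.comp hn hr, fun k => ⟨?_, ?_⟩⟩
  · refine Nat.mul_pos (hmn k).1 (Nat.pos_of_ne_zero fun hr0 => (hpos k).ne' ?_)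
    simp [(hrs k).2, hr0]
  · simp only [(hmn k).2, (hrs k).2, div_div_div_eq, Nat.cast_mul, Nat.cast_mul]

theorem computable₂_floor_mul_two_pow (ha : ComputableRatSeq a) :
    Computable₂ fun k n : ℕ => ⌊a k * 2 ^ n⌋₊ := by
  obtain ⟨num, den, hnum, hden, h⟩ := ha
  have hdiv : Computable₂ fun k n : ℕ => num k * 2 ^ n / den k :=
    Primrec.nat_div.to_comp.comp
      (Primrec.nat_mul.to_comp.comp (hnum.comp Computable.fst)
        (primrec_two_pow.to_comp.comp Computable.snd))
      (hden.comp Computable.fst)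
  refine hdiv.of_eq fun ⟨k, n⟩ => ?_
  have hfrac : a k * 2 ^ n = ((num k * 2 ^ n : ℕ) : ℝ) / den k := by
    rw [(h k).2, div_mul_eq_mul_div]
    push_cast
    rfl
  exact (hfrac ▸ Nat.floor_div_eq_div (K := ℝ) _ _).symm

theorem max_zero {f : ℕ → ℚ} (hf : Computable f) : ComputableRatSeq fun k => max (f k : ℝ) 0 := by
  refine ⟨_, _, primrec_int_toNat.to_comp.comp (computable_rat_num.comp hf),
    computable_rat_den.comp hf, fun k => ⟨(f k).den_pos, ?_⟩⟩
  have hnum : (((f k).num.toNat : ℕ) : ℝ) = max ((f k).num : ℝ) 0 := by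
    exact_mod_cast Int.toNat_eq_max _
  calc max (f k : ℝ) 0 = max ((f k).num / (f k).den : ℝ) (0 / (f k).den) := by
        rw [zero_div, ← Rat.cast_def]
    _ = ((f k).num.toNat : ℕ) / (f k).den := by rw [max_div_div_right (Nat.cast_nonneg _), hnum]

theorem leftComputable (ha : ComputableRatSeq a) {x : ℝ} (hle : ∀ k, a k ≤ x)
    (hlim : Tendsto a atTop (nhds x)) : LeftComputable x := by
  obtain ⟨num, den, hnum, hden, h⟩ := ha
  have hcast (k : ℕ) : ((-(num k / den k : ℚ) : ℚ) : ℝ) = -a k := by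
    rw [(h k).2]
    push_cast
    rfl
  refine ⟨_, computable_neg_natCast_div hnum hden fun k => (h k).1, fun k => ?_, ?_⟩
  · rw [hcast]
    exact neg_le_neg (hle k)
  · simpa only [hcast] using hlim.neg

end ComputableRatSeq

section DyadicApproximation

/-- `x` is computably approximated from below by the dyadic rationals `u k / 2 ^ k`, with error
`O(2 ^ (-k))`. -/
def HasDyadicApprox (x : ℝ) : Prop :=
  ∃ (u : ℕ → ℕ) (C : ℕ), Computable u ∧ ∀ k, u k ≤ 2 ^ k * x ∧ 2 ^ k * x ≤ u k + C

theorem ComputableReal.hasDyadicApprox {x : ℝ} (hx : ComputableReal x) (hx0 : 0 ≤ x) :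
    HasDyadicApprox x := by
  obtain ⟨f, hf, hfx⟩ := hx
  set a : ℕ → ℝ := fun k => max (f (2 ^ k) : ℝ) 0
  have hfloor : Computable fun k : ℕ => ⌊a k * 2 ^ k⌋₊ :=
    ((ComputableRatSeq.max_zero hf).comp primrec_two_pow.to_comp).computable₂_floor_mul_two_pow.comp
      Computable.id Computable.id
  have hclose (k : ℕ) : |a k * 2 ^ k - 2 ^ k * x| ≤ 1 := by
    have h2k : (0 : ℝ) < 2 ^ k := by positivity
    have hmax : |x - a k| ≤ |x - f (2 ^ k)| := by
      have := abs_max_sub_max_le_abs x (f (2 ^ k) : ℝ) 0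
      rwa [max_eq_left hx0] at this
    have hfk : |x - f (2 ^ k)| < 1 / 2 ^ k := by exact_mod_cast hfx (2 ^ k) Nat.one_le_two_pow
    calc |a k * 2 ^ k - 2 ^ k * x| = |x - a k| * 2 ^ k := by
          rw [mul_comm (2 ^ k) x, ← sub_mul, abs_mul, abs_sub_comm, abs_of_pos h2k]
      _ ≤ 1 / 2 ^ k * 2 ^ k := by gcongr; exact hmax.trans hfk.le
      _ = 1 := by field_simp
  refine ⟨fun k => ⌊a k * 2 ^ k⌋₊ - 1, 3, Primrec.pred.to_comp.comp hfloor, fun k => ?_⟩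
  have hle := Nat.floor_le (show 0 ≤ a k * 2 ^ k by positivity)
  have hlt := Nat.lt_floor_add_one (a k * 2 ^ k)
  obtain ⟨hlow, hup⟩ := abs_le.1 (hclose k)
  beta_reduce
  rcases Nat.eq_zero_or_pos ⌊a k * 2 ^ k⌋₊ with h0 | hpos
  · rw [h0] at hlt ⊢
    push_cast at hlt ⊢
    exact ⟨by positivity, by linarith⟩
  · rw [Nat.cast_pred hpos]
    push_cast
    constructor <;> linarith

/-- `⌊2 ^ k * 2 ^ (-Q / P)⌋` in integer arithmetic; it is `0` when `P = 0 < Q`. -/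
def floorTwoRpow (k P Q : ℕ) : ℕ :=
  Nat.findGreatest (fun u => 2 ^ Q * u ^ P ≤ (2 ^ k) ^ P) (2 ^ k)

theorem primrec_floorTwoRpow : Primrec fun x : ℕ × ℕ × ℕ => floorTwoRpow x.1 x.2.1 x.2.2 := by
  have hle : PrimrecPred fun y : (ℕ × ℕ × ℕ) × ℕ =>
      2 ^ y.1.2.2 * y.2 ^ y.1.2.1 ≤ (2 ^ y.1.1) ^ y.1.2.1 := by
    have hP : Primrec fun y : (ℕ × ℕ × ℕ) × ℕ => y.1.2.1 :=
      Primrec.fst.comp (Primrec.snd.comp Primrec.fst)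
    have hQ : Primrec fun y : (ℕ × ℕ × ℕ) × ℕ => y.1.2.2 :=
      Primrec.snd.comp (Primrec.snd.comp Primrec.fst)
    exact Primrec.nat_le.comp
      (Primrec.nat_mul.comp (primrec_two_pow.comp hQ) (primrec_pow.comp Primrec.snd hP))
      (primrec_pow.comp (primrec_two_pow.comp (Primrec.fst.comp Primrec.fst)) hP)
  exact Primrec.nat_findGreatest (primrec_two_pow.comp Primrec.fst) hle.primrecRel

theorem floorTwoRpow_zero {k Q : ℕ} (hQ : 0 < Q) : floorTwoRpow k 0 Q = 0 := by
  rw [floorTwoRpow, Nat.findGreatest_eq_zero_iff]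
  intro n _ _
  simpa using hQ.ne'

theorem floorTwoRpow_eq_floor {k P Q : ℕ} (hP : 0 < P) :
    floorTwoRpow k P Q = ⌊(2 : ℝ) ^ k * 2 ^ (-(Q : ℝ) / P)⌋₊ := by
  set c : ℝ := 2 ^ (-(Q : ℝ) / P) with hc
  have : 0 < c := by positivity
  have hc1 : c ≤ 1 := Real.rpow_le_one_of_one_le_of_nonpos one_le_two
    (div_nonpos_of_nonpos_of_nonneg (neg_nonpos.2 Q.cast_nonneg) P.cast_nonneg)
  have hcP : c ^ P = ((2 : ℝ) ^ Q)⁻¹ := by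
    rw [hc, ← Real.rpow_natCast, ← Real.rpow_mul zero_le_two, div_mul_cancel₀ _ (by positivity),
      Real.rpow_neg zero_le_two, Real.rpow_natCast]
  have hiff (u : ℕ) : 2 ^ Q * u ^ P ≤ (2 ^ k) ^ P ↔ u ≤ ⌊2 ^ k * c⌋₊ := by
    rw [Nat.le_floor_iff (by positivity),
      ← pow_le_pow_iff_left₀ (a := (u : ℝ)) (by positivity) (by positivity) hP.ne', mul_pow, hcP,
      ← div_eq_mul_inv, le_div_iff₀ (by positivity), mul_comm]
    exact_mod_cast Iff.rfl
  rw [floorTwoRpow, Nat.findGreatest_eq_iff]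
  refine ⟨?_, fun _ => (hiff _).2 le_rfl, fun n hn _ h => ((hiff n).1 h).not_gt hn⟩
  rw [← Nat.cast_le (α := ℝ)]
  calc (⌊2 ^ k * c⌋₊ : ℝ) ≤ 2 ^ k * c := Nat.floor_le (by positivity)
    _ ≤ 2 ^ k * 1 := by gcongr
    _ = ((2 ^ k : ℕ) : ℝ) := by push_cast; ring

theorem two_rpow_neg_one_div_le_one {T : ℝ} (hT : 0 < T) : (2 : ℝ) ^ (-1 / T) ≤ 1 :=
  Real.rpow_le_one_of_one_le_of_nonpos one_le_two
    (div_nonpos_of_nonpos_of_nonneg (by norm_num) hT.le)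

theorem two_rpow_neg_one_div_sub_le {t T : ℝ} (ht : 0 < t) (htT : t ≤ T) :
    (2 : ℝ) ^ (-1 / T) - 2 ^ (-1 / t) ≤ (2 / T ^ 2 + 2 / T) * (T - t) := by
  have hT : 0 < T := ht.trans_le htT
  have : 0 ≤ T - t := sub_nonneg.2 htT
  set b : ℝ := 2 ^ (-1 / T) with hb
  have hb0 : 0 < b := by positivity
  have hb1 : b ≤ 1 := two_rpow_neg_one_div_le_one hT
  rcases lt_or_ge t (T / 2) with hsmall | hlarge
  · calc b - 2 ^ (-1 / t) ≤ 1 := by linarith [Real.rpow_pos_of_pos two_pos (-1 / t)]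
      _ = 2 / T * (T / 2) := by field_simp
      _ ≤ 2 / T * (T - t) := by gcongr; linarith
      _ ≤ (2 / T ^ 2 + 2 / T) * (T - t) := by
        gcongr
        exact le_add_of_nonneg_left (by positivity)
  · set z := 1 / t - 1 / T with hz
    have hz0 : 0 ≤ z := sub_nonneg.2 (one_div_le_one_div_of_le ht htT)
    have hfactor : (2 : ℝ) ^ (-1 / t) = b * 2 ^ (-z) := by
      rw [hb, ← Real.rpow_add two_pos]
      congr 1
      rw [hz]
      ring
    have hexp : 1 - z ≤ (2 : ℝ) ^ (-z) := by
      rw [Real.rpow_def_of_pos two_pos]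
      nlinarith [Real.add_one_le_exp (Real.log 2 * -z), Real.log_two_lt_d9]
    calc b - 2 ^ (-1 / t) = b * (1 - 2 ^ (-z)) := by rw [hfactor]; ring
      _ ≤ 1 * z := by nlinarith
      _ = (T - t) / (t * T) := by rw [hz]; field_simp
      _ ≤ (T - t) / (T / 2 * T) := by gcongr
      _ = 2 / T ^ 2 * (T - t) := by field_simp
      _ ≤ (2 / T ^ 2 + 2 / T) * (T - t) := by
        gcongr
        exact le_add_of_nonneg_right (by positivity)

theorem HasDyadicApprox.two_rpow_neg_one_div {T : ℝ} (hT : HasDyadicApprox T) (hT0 : 0 < T) :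
    HasDyadicApprox (2 ^ (-1 / T)) := by
  obtain ⟨P, C, hP, hPT⟩ := hT
  set L : ℝ := 2 / T ^ 2 + 2 / T with hL
  refine ⟨fun k => floorTwoRpow k (P k) (2 ^ k), ⌈L * C⌉₊ + 1, primrec_floorTwoRpow.to_comp.comp
    (Computable.id.pair (hP.pair primrec_two_pow.to_comp)), fun k => ?_⟩
  have h2k : (0 : ℝ) < 2 ^ k := by positivity
  have hceil := Nat.le_ceil (L * C)
  have herr : L * (2 ^ k * T - P k) ≤ L * C := by
    gcongr
    linarith [(hPT k).2]
  beta_reduce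
  rcases Nat.eq_zero_or_pos (P k) with hP0 | hPpos
  · rw [hP0, floorTwoRpow_zero (by positivity)]
    refine ⟨by simp only [Nat.cast_zero]; positivity, ?_⟩
    have hbound : (2 : ℝ) ^ k ≤ L * (2 ^ k * T - P k) := by
      have : L * (2 ^ k * T) = 2 ^ k * (2 / T + 2) := by rw [hL]; field_simp
      rw [hP0, Nat.cast_zero, sub_zero, this]
      exact le_mul_of_one_le_right h2k.le (by linarith [div_pos two_pos hT0])
    have := mul_le_of_le_one_right h2k.le (two_rpow_neg_one_div_le_one hT0)
    push_cast
    linarith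
  · set t : ℝ := P k / 2 ^ k with ht
    have ht0 : 0 < t := by positivity
    have htT : t ≤ T := (div_le_iff₀' h2k).2 (hPT k).1
    have hfloor : floorTwoRpow k (P k) (2 ^ k) = ⌊(2 : ℝ) ^ k * 2 ^ (-1 / t)⌋₊ := by
      rw [floorTwoRpow_eq_floor hPpos, ht]
      congr 3
      push_cast
      field_simp
    have hmono : (2 : ℝ) ^ (-1 / t) ≤ 2 ^ (-1 / T) := by
      refine Real.rpow_le_rpow_of_exponent_le one_le_two ?_
      rw [neg_div, neg_div]
      exact neg_le_neg (one_div_le_one_div_of_le ht0 htT)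
    have hscale : 2 ^ k * (T - t) = 2 ^ k * T - P k := by rw [ht]; field_simp
    have hlip := mul_le_mul_of_nonneg_left (two_rpow_neg_one_div_sub_le ht0 htT) h2k.le
    rw [mul_left_comm, hscale] at hlip
    rw [hfloor]
    refine ⟨(Nat.floor_le (by positivity)).trans (by gcongr), ?_⟩
    have := Nat.lt_floor_add_one ((2 : ℝ) ^ k * 2 ^ (-1 / t))
    push_cast
    linarith

end DyadicApproximation

theorem pow_sub_pow_le {a b c : ℝ} (ha : 0 ≤ a) (hac : a ≤ c) (hb : 0 < b) (hbc : b ≤ c) (n : ℕ) :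
    c ^ n - a ^ n ≤ (c - a) * (n * c ^ n / b) := by
  have hc : 0 ≤ c := hb.le.trans hbc
  have hca : 0 ≤ c - a := sub_nonneg.2 hac
  have hlip := abs_pow_sub_pow_le c a n
  rw [abs_of_nonneg (sub_nonneg.2 (pow_le_pow_left₀ ha hac n)), abs_of_nonneg hca,
    abs_of_nonneg ha, abs_of_nonneg hc, max_eq_left hac, mul_assoc] at hlip
  refine hlip.trans (mul_le_mul_of_nonneg_left ?_ hca)
  rcases n with _ | n
  · simp
  · rw [le_div_iff₀ hb, Nat.add_sub_cancel, mul_assoc]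
    gcongr
    exact mul_le_mul_of_nonneg_left hbc (by positivity)

section LengthSums

variable {ι : Type*} (ℓ : ι → ℕ)

/-- The partition function `∑ b ^ ℓ p`; `Z(T)` in the paper, with `b = 2 ^ (-1 / T)`. -/
noncomputable def partitionSum (b : ℝ) : ℝ := ∑' p, b ^ ℓ p

/-- The length-weighted sum `∑ ℓ p * b ^ ℓ p`; `W(1, T)` in the paper. -/
noncomputable def lengthSum (b : ℝ) : ℝ := ∑' p, ℓ p * b ^ ℓ p

/-- The mean length `∑ ℓ p * b ^ ℓ p / ∑ b ^ ℓ p`; `E(T)` in the paper. -/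
noncomputable def energy (b : ℝ) : ℝ := lengthSum ℓ b / partitionSum ℓ b

/-- The approximation to `energy ℓ b` by the indices in `S`, with `b` rounded down to `x` in the
numerator and up to `y` in the denominator so as to keep it below `energy ℓ b`. -/
noncomputable def partialEnergy (x y : ℝ) (S : Finset ι) : ℝ :=
  (∑ p ∈ S, ℓ p * x ^ ℓ p) / ∑ p ∈ S, y ^ ℓ p

variable {ℓ} {r b : ℝ}

theorem exists_pow_mul_pow_le (j : ℕ) (hr0 : 0 ≤ r) (hr1 : r < 1) :
    ∃ M : ℝ, ∀ n : ℕ, (n : ℝ) ^ j * r ^ n ≤ M := by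
  obtain ⟨M, hM⟩ :=
    (tendsto_pow_const_mul_const_pow_of_lt_one j hr0 hr1).bddAbove_range
  exact ⟨M, fun n => hM ⟨n, rfl⟩⟩

theorem summable_pow_mul_pow (hr : Summable fun p => r ^ ℓ p) (hb0 : 0 ≤ b) (hbr : b < r) (j : ℕ) :
    Summable fun p => (ℓ p : ℝ) ^ j * b ^ ℓ p := by
  have hr0 : 0 < r := hb0.trans_lt hbr
  obtain ⟨M, hM⟩ := exists_pow_mul_pow_le j (div_nonneg hb0 hr0.le) ((div_lt_one hr0).2 hbr)
  refine Summable.of_nonneg_of_le (fun p => by positivity) (fun p => ?_) (hr.mul_left M)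
  calc (ℓ p : ℝ) ^ j * b ^ ℓ p = (ℓ p : ℝ) ^ j * (b / r) ^ ℓ p * r ^ ℓ p := by
        rw [mul_assoc, ← mul_pow, div_mul_cancel₀ b hr0.ne']
    _ ≤ M * r ^ ℓ p := by gcongr; exact hM _

theorem summable_pow (hr : Summable fun p => r ^ ℓ p) (hb0 : 0 ≤ b) (hbr : b < r) :
    Summable fun p => b ^ ℓ p := by
  simpa only [pow_zero, one_mul] using summable_pow_mul_pow hr hb0 hbr 0

theorem summable_mul_pow (hr : Summable fun p => r ^ ℓ p) (hb0 : 0 ≤ b) (hbr : b < r) :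
    Summable fun p => ℓ p * b ^ ℓ p := by
  simpa only [pow_one] using summable_pow_mul_pow hr hb0 hbr 1

theorem sum_mul_pow_le_lengthSum (hb : 0 ≤ b) (hW : Summable fun p => ℓ p * b ^ ℓ p)
    (S : Finset ι) : ∑ p ∈ S, ℓ p * b ^ ℓ p ≤ lengthSum ℓ b :=
  hW.sum_le_tsum S fun p _ => by positivity

theorem finite_le_of_summable_pow (hr0 : 0 < r) (hr1 : r ≤ 1) (hr : Summable fun p => r ^ ℓ p)
    (L : ℕ) : {p | ℓ p ≤ L}.Finite := by
  have hsmall := hr.tendsto_cofinite_zero.eventually (gt_mem_nhds (pow_pos hr0 L))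
  exact (Filter.eventually_cofinite.1 hsmall).subset fun p hp hlt =>
    hlt.not_ge (pow_le_pow_of_le_one hr0.le hr1 hp)

section Energy

variable (hb : 0 < b) (hZ : Summable fun p => b ^ ℓ p) (hW : Summable fun p => ℓ p * b ^ ℓ p)

include hb in
theorem energy_nonneg : 0 ≤ energy ℓ b :=
  div_nonneg (tsum_nonneg fun p => by positivity) (tsum_nonneg fun p => by positivity)

include hb hZ

theorem partitionSum_pos [Nonempty ι] : 0 < partitionSum ℓ b :=
  hZ.tsum_pos (fun p => by positivity) (Classical.arbitrary ι) (by positivity)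

theorem energy_mul_partitionSum [Nonempty ι] :
    energy ℓ b * partitionSum ℓ b = lengthSum ℓ b :=
  div_mul_cancel₀ _ (partitionSum_pos hb hZ).ne'

include hW

theorem hasSum_sub_energy_mul_pow [Nonempty ι] :
    HasSum (fun p => (ℓ p - energy ℓ b) * b ^ ℓ p) 0 := by
  have h := hW.hasSum.sub (hZ.hasSum.mul_left (energy ℓ b))
  have hzero : lengthSum ℓ b - energy ℓ b * partitionSum ℓ b = 0 := by
    rw [energy_mul_partitionSum hb hZ, sub_self]
  simp only [sub_mul]
  exact hzero ▸ h

variable {S : Finset ι}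

theorem sum_sub_energy_mul_pow_nonpos [Nonempty ι] (hS : ∀ p ∉ S, energy ℓ b ≤ ℓ p) :
    ∑ p ∈ S, (ℓ p - energy ℓ b) * b ^ ℓ p ≤ 0 :=
  sum_le_hasSum S (fun p hp => mul_nonneg (sub_nonneg.2 (hS p hp)) (by positivity))
    (hasSum_sub_energy_mul_pow hb hZ hW)

theorem sub_energy_mul_pow_le [Nonempty ι] (hS : ∀ p ∉ S, energy ℓ b ≤ ℓ p) {p : ι} (hp : p ∉ S) :
    (ℓ p - energy ℓ b) * b ^ ℓ p ≤ -∑ q ∈ S, (ℓ q - energy ℓ b) * b ^ ℓ q := by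
  classical
  have hinsert := sum_sub_energy_mul_pow_nonpos hb hZ hW (S := insert p S)
    fun q hq => hS q fun h => hq (Finset.mem_insert_of_mem h)
  rw [Finset.sum_insert hp] at hinsert
  linarith

variable {x y : ℝ} (hx : 0 ≤ x) (hxb : x ≤ b) (hby : b ≤ y)
include hx hxb hby

omit hZ hW in
theorem partialEnergy_mul_sum_pow_le (hne : S.Nonempty) :
    partialEnergy ℓ x y S * ∑ p ∈ S, b ^ ℓ p ≤ ∑ p ∈ S, ℓ p * b ^ ℓ p := by
  have hy : 0 < y := hb.trans_le hby
  have hden : 0 < ∑ p ∈ S, y ^ ℓ p := Finset.sum_pos (fun p _ => by positivity) hne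
  have hq : 0 ≤ partialEnergy ℓ x y S :=
    div_nonneg (Finset.sum_nonneg fun p _ => by positivity) hden.le
  calc partialEnergy ℓ x y S * ∑ p ∈ S, b ^ ℓ p ≤ partialEnergy ℓ x y S * ∑ p ∈ S, y ^ ℓ p := by
        gcongr
    _ = ∑ p ∈ S, ℓ p * x ^ ℓ p := div_mul_cancel₀ _ hden.ne'
    _ ≤ ∑ p ∈ S, ℓ p * b ^ ℓ p := by gcongr

theorem partialEnergy_le_energy (hne : S.Nonempty) (hS : ∀ p ∉ S, energy ℓ b ≤ ℓ p) :
    partialEnergy ℓ x y S ≤ energy ℓ b := by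
  have : Nonempty ι := hne.to_type
  have hpos : 0 < ∑ p ∈ S, b ^ ℓ p := Finset.sum_pos (fun p _ => by positivity) hne
  have hsum := sum_sub_energy_mul_pow_nonpos hb hZ hW hS
  simp only [sub_mul, Finset.sum_sub_distrib, ← Finset.mul_sum] at hsum
  exact le_of_mul_le_mul_right
    ((partialEnergy_mul_sum_pow_le hb hx hxb hby hne).trans (sub_nonpos.1 hsum)) hpos

theorem add_one_mul_pow_le_of_notMem (hne : S.Nonempty) (hS : ∀ p ∉ S, 2 * energy ℓ b + 1 ≤ ℓ p)
    {p : ι} (hp : p ∉ S) :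
    (ℓ p + 1) * b ^ ℓ p ≤ 2 * partitionSum ℓ b * (energy ℓ b - partialEnergy ℓ x y S) := by
  have : Nonempty ι := hne.to_type
  have := energy_nonneg (ℓ := ℓ) hb
  have hS' : ∀ p ∉ S, energy ℓ b ≤ ℓ p := fun p hp => by linarith [hS p hp]
  have hgap : 0 ≤ energy ℓ b - partialEnergy ℓ x y S :=
    sub_nonneg.2 (partialEnergy_le_energy hb hZ hW hx hxb hby hne hS')
  have hout := sub_energy_mul_pow_le hb hZ hW hS' hp
  simp only [sub_mul, Finset.sum_sub_distrib, ← Finset.mul_sum] at hout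
  have hq := partialEnergy_mul_sum_pow_le (ℓ := ℓ) hb hx hxb hby hne
  have hhalf : (ℓ p + 1) * b ^ ℓ p ≤ 2 * ((ℓ p - energy ℓ b) * b ^ ℓ p) := by
    rw [← mul_assoc]
    gcongr
    linarith [hS p hp]
  calc (ℓ p + 1) * b ^ ℓ p
      ≤ 2 * (energy ℓ b * ∑ p ∈ S, b ^ ℓ p - ∑ p ∈ S, ℓ p * b ^ ℓ p) := by linarith
    _ ≤ 2 * ((∑ p ∈ S, b ^ ℓ p) * (energy ℓ b - partialEnergy ℓ x y S)) := by
        linarith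
    _ ≤ 2 * partitionSum ℓ b * (energy ℓ b - partialEnergy ℓ x y S) := by
        rw [mul_assoc]
        gcongr
        exact hZ.sum_le_tsum _ fun p _ => by positivity

end Energy

theorem sum_pow_sub_sum_pow_le {c y : ℝ} (hc : Summable fun p => ℓ p * c ^ ℓ p) (hb : 0 < b)
    (hby : b ≤ y) (hyc : y ≤ c) (S : Finset ι) :
    ∑ p ∈ S, y ^ ℓ p - ∑ p ∈ S, b ^ ℓ p ≤ (y - b) * (lengthSum ℓ c / b) := by
  have hy : 0 ≤ y := hb.le.trans hby
  have : 0 ≤ y - b := sub_nonneg.2 hby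
  calc ∑ p ∈ S, y ^ ℓ p - ∑ p ∈ S, b ^ ℓ p = ∑ p ∈ S, (y ^ ℓ p - b ^ ℓ p) :=
        (Finset.sum_sub_distrib _ _).symm
    _ ≤ ∑ p ∈ S, (y - b) * (ℓ p * c ^ ℓ p / b) := by
        gcongr with p
        exact (pow_sub_pow_le hb.le hby hb hby (ℓ p)).trans (by gcongr)
    _ = (y - b) * ((∑ p ∈ S, ℓ p * c ^ ℓ p) / b) := by rw [← Finset.mul_sum, Finset.sum_div]
    _ ≤ (y - b) * (lengthSum ℓ c / b) := by
        gcongr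
        exact sum_mul_pow_le_lengthSum (hy.trans hyc) hc S

theorem sum_mul_pow_sub_sum_mul_pow_le {x : ℝ} (hV : Summable fun p => (ℓ p : ℝ) ^ 2 * b ^ ℓ p)
    (hb : 0 < b) (hx : 0 ≤ x) (hxb : x ≤ b) (S : Finset ι) :
    ∑ p ∈ S, ℓ p * b ^ ℓ p - ∑ p ∈ S, ℓ p * x ^ ℓ p ≤
      (b - x) * ((∑' p, (ℓ p : ℝ) ^ 2 * b ^ ℓ p) / b) := by
  have : 0 ≤ b - x := sub_nonneg.2 hxb
  calc ∑ p ∈ S, ℓ p * b ^ ℓ p - ∑ p ∈ S, ℓ p * x ^ ℓ p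
      = ∑ p ∈ S, (ℓ p : ℝ) * (b ^ ℓ p - x ^ ℓ p) := by
        simp only [mul_sub, Finset.sum_sub_distrib]
    _ ≤ ∑ p ∈ S, (ℓ p : ℝ) * ((b - x) * (ℓ p * b ^ ℓ p / b)) := by
        gcongr with p
        exact pow_sub_pow_le hx hxb hb le_rfl (ℓ p)
    _ = (b - x) * ((∑ p ∈ S, (ℓ p : ℝ) ^ 2 * b ^ ℓ p) / b) := by
        rw [Finset.sum_div, Finset.mul_sum]
        exact Finset.sum_congr rfl fun p _ => by ring
    _ ≤ (b - x) * ((∑' p, (ℓ p : ℝ) ^ 2 * b ^ ℓ p) / b) := by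
        gcongr
        exact hV.sum_le_tsum _ fun p _ => by positivity

theorem exists_energy_sub_partialEnergy_le {c : ℝ} (hr : Summable fun p => r ^ ℓ p) (hb : 0 < b)
    (hbc : b ≤ c) (hcr : c < r) (p₀ : ι) :
    ∃ K > 0, ∀ (S : Finset ι) (x y : ℝ), p₀ ∈ S → 0 ≤ x → x ≤ b → b ≤ y → y ≤ c →
      energy ℓ b - partialEnergy ℓ x y S ≤
        K * ((y - x) + (lengthSum ℓ b - ∑ p ∈ S, ℓ p * b ^ ℓ p)) := by
  have : Nonempty ι := ⟨p₀⟩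
  have hbr : b < r := hbc.trans_lt hcr
  have hc : 0 < c := hb.trans_le hbc
  have hZ := summable_pow hr hb.le hbr
  have hW := summable_mul_pow hr hb.le hbr
  have hV := summable_pow_mul_pow hr hb.le hbr 2
  have hE := energy_nonneg (ℓ := ℓ) hb
  set V : ℝ := (∑' p, (ℓ p : ℝ) ^ 2 * b ^ ℓ p) / b
  have hV0 : 0 ≤ V := div_nonneg (tsum_nonneg fun p => by positivity) hb.le
  set V' : ℝ := lengthSum ℓ c / b
  have hV'0 : 0 ≤ V' := div_nonneg (tsum_nonneg fun p => by positivity) hb.le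
  refine ⟨(energy ℓ b * V' + V + 1) / b ^ ℓ p₀, by positivity, fun S x y hp₀ hx hxb hby hyc => ?_⟩
  have hy : 0 < y := hb.trans_le hby
  have htail : 0 ≤ lengthSum ℓ b - ∑ p ∈ S, ℓ p * b ^ ℓ p :=
    sub_nonneg.2 (sum_mul_pow_le_lengthSum hb.le hW S)
  have hden : b ^ ℓ p₀ ≤ ∑ p ∈ S, y ^ ℓ p :=
    (pow_le_pow_left₀ hb.le hby _).trans
      (Finset.single_le_sum (f := fun p => y ^ ℓ p) (fun p _ => by positivity) hp₀)
  have hbp : 0 < b ^ ℓ p₀ := by positivity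
  have hZS : energy ℓ b * ∑ p ∈ S, b ^ ℓ p ≤ lengthSum ℓ b :=
    energy_mul_partitionSum hb hZ ▸ mul_le_mul_of_nonneg_left
      (hZ.sum_le_tsum _ fun p _ => by positivity) hE
  have hnum : energy ℓ b * ∑ p ∈ S, y ^ ℓ p - ∑ p ∈ S, ℓ p * x ^ ℓ p ≤
      (energy ℓ b * V' + V + 1) * ((y - x) + (lengthSum ℓ b - ∑ p ∈ S, ℓ p * b ^ ℓ p)) := by
    have hD := mul_le_mul_of_nonneg_left
      (sum_pow_sub_sum_pow_le (summable_mul_pow hr hc.le hcr) hb hby hyc S) hE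
    have hN := sum_mul_pow_sub_sum_mul_pow_le hV hb hx hxb S
    have hEV : 0 ≤ energy ℓ b * V' := by positivity
    nlinarith [mul_nonneg hEV htail, mul_nonneg hV0 htail, mul_nonneg hEV (sub_nonneg.2 hxb),
      mul_nonneg hV0 (sub_nonneg.2 hby)]
  calc energy ℓ b - partialEnergy ℓ x y S
      = (energy ℓ b * ∑ p ∈ S, y ^ ℓ p - ∑ p ∈ S, ℓ p * x ^ ℓ p) / ∑ p ∈ S, y ^ ℓ p := by
        rw [partialEnergy, sub_div, mul_div_cancel_right₀ _ (hbp.trans_le hden).ne']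
    _ ≤ (energy ℓ b * V' + V + 1) * ((y - x) + (lengthSum ℓ b - ∑ p ∈ S, ℓ p * b ^ ℓ p)) /
          b ^ ℓ p₀ :=
        div_le_div₀ (mul_nonneg (by positivity) (by linarith)) hnum hbp hden
    _ = (energy ℓ b * V' + V + 1) / b ^ ℓ p₀ *
          ((y - x) + (lengthSum ℓ b - ∑ p ∈ S, ℓ p * b ^ ℓ p)) := by ring

theorem exists_lengthSum_sub_sum_le {β : ℝ} (hb : 0 < b) (hbβ : b < β) (hβr : β ≤ r) (hr1 : r < 1)
    (hr : Summable fun p => r ^ ℓ p) :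
    ∃ K > 0, ∀ (S : Finset ι) (m : ℕ), partitionSum ℓ r - ∑ p ∈ S, r ^ ℓ p ≤ r ^ m →
      lengthSum ℓ b - ∑ p ∈ S, ℓ p * b ^ ℓ p ≤ K * β ^ m := by
  have hβ : 0 < β := hb.trans hbβ
  have hr0 : 0 < r := hβ.trans_le hβr
  obtain ⟨M, hM⟩ := exists_pow_mul_pow_le 1 (by positivity) ((div_lt_one hβ).2 hbβ)
  have hM0 : 0 ≤ M := by simpa using hM 0
  refine ⟨M + 1, by positivity, fun S m hS => ?_⟩
  have hW := summable_mul_pow hr hb.le (hbβ.trans_le hβr)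
  have hrS : Summable fun p : ↥((S : Set ι)ᶜ) => r ^ ℓ p := hr.subtype _
  have hWS : Summable fun p : ↥((S : Set ι)ᶜ) => ℓ p * b ^ ℓ p := hW.subtype _
  rw [partitionSum, ← hr.sum_add_tsum_compl (s := S), add_sub_cancel_left] at hS
  rw [lengthSum, ← hW.sum_add_tsum_compl (s := S), add_sub_cancel_left]
  have hterm (p : ↥((S : Set ι)ᶜ)) : ℓ p * b ^ ℓ p ≤ M * (β / r) ^ m * r ^ ℓ p := by
    have hm : m ≤ ℓ p := (pow_le_pow_iff_right_of_lt_one₀ hr0 hr1).1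
      ((hrS.le_tsum p fun q _ => by positivity).trans hS)
    calc ℓ p * b ^ ℓ p = (ℓ p : ℝ) ^ 1 * (b / β) ^ ℓ p * (β / r) ^ ℓ p * r ^ ℓ p := by
          rw [mul_assoc, mul_assoc, ← mul_pow, ← mul_pow, pow_one]
          congr 2
          field_simp
      _ ≤ M * (β / r) ^ m * r ^ ℓ p := by
          have hpow := pow_le_pow_of_le_one (by positivity) ((div_le_one hr0).2 hβr) hm
          exact mul_le_mul_of_nonneg_right (mul_le_mul (hM _) hpow (by positivity) hM0)
            (by positivity)
  calc ∑' p : ↥((S : Set ι)ᶜ), ℓ p * b ^ ℓ p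
      ≤ ∑' p : ↥((S : Set ι)ᶜ), M * (β / r) ^ m * r ^ ℓ p := hWS.tsum_le_tsum hterm (hrS.mul_left _)
    _ = M * (β / r) ^ m * ∑' p : ↥((S : Set ι)ᶜ), r ^ ℓ p := tsum_mul_left
    _ ≤ M * (β / r) ^ m * r ^ m := by gcongr
    _ = M * β ^ m := by rw [mul_assoc, ← mul_pow, div_mul_cancel₀ β hr0.ne']
    _ ≤ (M + 1) * β ^ m := by gcongr; exact le_add_of_nonneg_right zero_le_one

end LengthSums

section Kraft

theorem PrefixFree.mono {A B : Set (List Bool)} (hB : PrefixFree B) (hAB : A ⊆ B) :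
    PrefixFree A :=
  fun p hp q hq => hB p (hAB hp) q (hAB hq)

theorem PrefixFree.eq_singleton_nil {A : Set (List Bool)} (hA : PrefixFree A) (hnil : [] ∈ A) :
    A = {[]} :=
  Set.eq_singleton_iff_unique_mem.2
    ⟨hnil, fun p hp => (hA [] hnil p hp List.nil_prefix).symm⟩

theorem PrefixFree.uniquelyDecodable {A : Set (List Bool)} (hA : PrefixFree A) (hnil : [] ∉ A) :
    InformationTheory.UniquelyDecodable A := by
  intro L₁
  induction L₁ with
  | nil =>
    rintro (_ | ⟨w, L₂⟩) _ hL₂ h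
    · rfl
    · simp only [List.flatten_nil, List.flatten_cons, List.nil_eq_append_iff] at h
      exact absurd (h.1 ▸ hL₂ w List.mem_cons_self) hnil
  | cons v L₁ ih =>
    rintro (_ | ⟨w, L₂⟩) hL₁ hL₂ h
    · simp only [List.flatten_nil, List.flatten_cons, List.append_eq_nil_iff] at h
      exact absurd (h.1 ▸ hL₁ v List.mem_cons_self) hnil
    · rw [List.flatten_cons, List.flatten_cons] at h
      rw [List.forall_mem_cons] at hL₁ hL₂
      have hvw : v = w := by
        rcases List.append_eq_append_iff.1 h with ⟨t, ht, -⟩ | ⟨t, ht, -⟩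
        · exact hA v hL₁.1 w hL₂.1 ⟨t, ht.symm⟩
        · exact (hA w hL₂.1 v hL₁.1 ⟨t, ht.symm⟩).symm
      subst hvw
      rw [ih L₂ hL₁.2 hL₂.2 (List.append_cancel_left h)]

theorem PrefixFree.sum_half_pow_length_le_one {F : Finset (List Bool)}
    (hF : PrefixFree (F : Set (List Bool))) : ∑ p ∈ F, (1 / 2 : ℝ) ^ p.length ≤ 1 := by
  by_cases hnil : [] ∈ F
  · rw [Finset.coe_eq_singleton.1 (hF.eq_singleton_nil hnil)]
    simp
  · simpa using InformationTheory.kraft_mcmillan_inequality (hF.uniquelyDecodable hnil)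

theorem PrefixFree.sum_subtype_half_pow_length_le_one {A : Set (List Bool)} (hA : PrefixFree A)
    (F : Finset A) : ∑ p ∈ F, (1 / 2 : ℝ) ^ (p : List Bool).length ≤ 1 := by
  have hF : PrefixFree (F.map (Function.Embedding.subtype (· ∈ A)) : Set (List Bool)) :=
    hA.mono fun p hp => by
      obtain ⟨q, -, rfl⟩ := Finset.mem_map.1 hp
      exact q.2
  simpa using hF.sum_half_pow_length_le_one

theorem PrefixFree.summable_half_pow_length {A : Set (List Bool)} (hA : PrefixFree A) :
    Summable fun p : A => (1 / 2 : ℝ) ^ (p : List Bool).length :=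
  summable_of_sum_le (fun p => by positivity) hA.sum_subtype_half_pow_length_le_one

theorem PrefixFree.tsum_half_pow_length_le_one {A : Set (List Bool)} (hA : PrefixFree A) :
    ∑' p : A, (1 / 2 : ℝ) ^ (p : List Bool).length ≤ 1 :=
  hA.summable_half_pow_length.tsum_le_of_sum_le hA.sum_subtype_half_pow_length_le_one

end Kraft

section Enumeration

open Encodable Nat.Partrec

theorem primrec_sum_map {α β : Type*} [Primcodable α] [Primcodable β] {l : α → List β}
    {g : α → β → ℕ} (hl : Primrec l) (hg : Primrec₂ g) :
    Primrec fun a => ((l a).map (g a)).sum := by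
  have hfoldl : Primrec fun a => ((l a).map (g a)).foldl (fun s b => s + b) 0 :=
    Primrec.list_foldl (Primrec.list_map hl hg) (Primrec.const 0)
      (Primrec.nat_add.comp (Primrec.fst.comp Primrec.snd) (Primrec.snd.comp Primrec.snd)).to₂
  exact hfoldl.of_eq fun a => List.sum_eq_foldl.symm

theorem exists_primrec_enumeration {α β : Type*} [Primcodable α] [Primcodable β] {f : α →. β}
    (hf : Partrec f) :
    ∃ l : ℕ → List α, Primrec l ∧ (∀ k, (l k).Nodup) ∧ (∀ i j, i ≤ j → l i ⊆ l j) ∧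
      (∀ k, ∀ a ∈ l k, (f a).Dom ∧ encode a < k ∧ ∀ b ∈ f a, encode b < k) ∧
      ∀ a, (f a).Dom → ∃ k, a ∈ l k := by
  obtain ⟨c, hc⟩ := Code.exists_code.1 hf
  have heval (a : α) (n : ℕ) : n ∈ c.eval (encode a) ↔ ∃ b ∈ f a, encode b = n := by
    simp [hc]
  set g : ℕ → ℕ → Option α := fun k n =>
    (c.evaln k n).bind fun x => if x < k then decode₂ α n else none with hg_def
  have hg : Primrec₂ g := Primrec.option_bind
    (Code.primrec_evaln.comp ((Primrec.fst.pair (Primrec.const c)).pair Primrec.snd))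
    (Primrec.ite (Primrec.nat_lt.comp Primrec.snd (Primrec.fst.comp Primrec.fst))
      (Primrec.decode₂.comp (Primrec.snd.comp Primrec.fst)) (Primrec.const none)).to₂
  have hmem (k n : ℕ) (a : α) : a ∈ g k n ↔ (∃ x ∈ c.evaln k n, x < k) ∧ encode a = n := by
    simp [hg_def, Option.bind_eq_some_iff, decode₂_eq_some, ← and_assoc]
  have hlist (k : ℕ) (a : α) :
      a ∈ (List.range k).filterMap (g k) ↔ ∃ x ∈ c.evaln k (encode a), x < k := by
    simp only [List.mem_filterMap, List.mem_range, ← Option.mem_def, hmem]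
    exact ⟨fun ⟨_, _, hx, hn⟩ => hn ▸ hx,
      fun ⟨x, hx, hxk⟩ => ⟨_, Code.evaln_bound hx, ⟨x, hx, hxk⟩, rfl⟩⟩
  refine ⟨fun k => (List.range k).filterMap (g k), Primrec.listFilterMap Primrec.list_range hg,
    fun k => ?_, fun i j hij a ha => ?_, fun k a ha => ?_, fun a ha => ?_⟩
  · refine List.Nodup.filterMap (fun n n' a ha ha' => ?_) List.nodup_range
    exact ((hmem k n a).1 ha).2.symm.trans ((hmem k n' a).1 ha').2
  · obtain ⟨x, hx, hxi⟩ := (hlist i a).1 ha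
    exact (hlist j a).2 ⟨x, Code.evaln_mono hij hx, hxi.trans_le hij⟩
  · obtain ⟨x, hx, hxk⟩ := (hlist k a).1 ha
    obtain ⟨b, hb, rfl⟩ := (heval a x).1 (Code.evaln_sound hx)
    exact ⟨Part.dom_iff_mem.2 ⟨b, hb⟩, Code.evaln_bound hx,
      fun b' hb' => Part.mem_unique hb hb' ▸ hxk⟩
  · obtain ⟨b, hb⟩ := Part.dom_iff_mem.1 ha
    obtain ⟨k, hk⟩ := Code.evaln_complete.1 ((heval a _).2 ⟨b, hb, rfl⟩)
    exact ⟨max k (encode b + 1), (hlist _ a).2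
      ⟨_, Code.evaln_mono (le_max_left _ _) hk,
      lt_max_of_lt_right (Nat.lt_succ_self _)⟩⟩

theorem ComputableRatSeq.sum_pow_mul_pow {α : Type*} [Primcodable α] {l : ℕ → List α}
    (hl : Primrec l) {φ : α → ℕ} (hφ : Primrec φ) (hφl : ∀ k, ∀ a ∈ l k, φ a ≤ k) {x : ℕ → ℝ}
    (hx : ComputableRatSeq x) (j : ℕ) :
    ComputableRatSeq fun k => ((l k).map fun a => (φ a : ℝ) ^ j * x k ^ φ a).sum := by
  obtain ⟨num, den, hnum, hden, h⟩ := hx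
  have hφ₂ : Primrec₂ fun (_ : ℕ × ℕ × ℕ) (a : α) => φ a := hφ.comp Primrec.snd
  have hsum : Primrec fun t : ℕ × ℕ × ℕ =>
      ((l t.1).map fun a => φ a ^ j * (t.2.1 ^ φ a * t.2.2 ^ (t.1 - φ a))).sum :=
    primrec_sum_map (hl.comp Primrec.fst) (Primrec.nat_mul.comp
      (primrec_pow.comp hφ₂ (Primrec.const j))
      (Primrec.nat_mul.comp
        (primrec_pow.comp ((Primrec.fst.comp Primrec.snd).comp Primrec.fst) hφ₂)
        (primrec_pow.comp ((Primrec.snd.comp Primrec.snd).comp Primrec.fst)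
          (Primrec.nat_sub.comp (Primrec.fst.comp Primrec.fst) hφ₂))))
  refine ⟨_, _, hsum.to_comp.comp (Computable.id.pair (hnum.pair hden)),
    primrec_pow.to_comp.comp hden Computable.id, fun k => ⟨Nat.pow_pos (h k).1, ?_⟩⟩
  have hd : (den k : ℝ) ≠ 0 := Nat.cast_ne_zero.2 (h k).1.ne'
  dsimp only [id]
  rw [Nat.cast_pow, eq_div_iff (pow_ne_zero k hd), ← List.sum_map_mul_right, Nat.cast_list_sum,
    List.map_map]
  refine congrArg List.sum (List.map_congr_left fun a ha => ?_)
  simp only [Function.comp_apply, Nat.cast_mul, Nat.cast_pow]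
  rw [(h k).2, div_pow, ← pow_mul_pow_sub (den k : ℝ) (hφl k a ha)]
  field_simp

/-- The length of a program of `U`. -/
abbrev Computer.programLength (U : Computer) (p : U.domain) : ℕ := (p : List Bool).length

theorem Computer.exists_exhaustion (U : Computer) :
    ∃ S : ℕ → Finset U.domain, Monotone S ∧ (∀ p, ∃ k, p ∈ S k) ∧
      (∀ k, ∀ p ∈ S k, ∀ s ∈ U.f p, s.length < k) ∧
      ∀ (x : ℕ → ℝ) (j : ℕ), ComputableRatSeq x → ComputableRatSeq fun k =>
        ∑ p ∈ S k, (U.programLength p : ℝ) ^ j * x k ^ U.programLength p := by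
  classical
  obtain ⟨l, hl, hnodup, hmono, hout, hexh⟩ := exists_primrec_enumeration U.partrec
  set S : ℕ → Finset U.domain := fun k => (l k).toFinset.subtype (· ∈ U.domain)
  have hS (k : ℕ) (p : U.domain) : p ∈ S k ↔ (p : List Bool) ∈ l k := by simp [S]
  have hsum (k : ℕ) (φ : List Bool → ℝ) : ∑ p ∈ S k, φ p = ((l k).map φ).sum :=
    (Finset.sum_subtype_of_mem (p := (· ∈ U.domain)) φ
      fun p hp => (hout k p (List.mem_toFinset.1 hp)).1).trans (List.sum_toFinset φ (hnodup k))
  refine ⟨S, fun i j hij p hp => (hS j p).2 (hmono i j hij ((hS i p).1 hp)), fun p => ?_,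
    fun k p hp s hs => ?_, fun x j hx => ?_⟩
  · obtain ⟨k, hk⟩ := hexh p p.2
    exact ⟨k, (hS k p).2 hk⟩
  · exact (length_le_encode s).trans_lt ((hout k p ((hS k p).1 hp)).2.2 s hs)
  · have hlen : ∀ k, ∀ p ∈ l k, p.length ≤ k := fun k p hp =>
      (length_le_encode p).trans (hout k p hp).2.1.le
    simpa only [← hsum _ fun p => (p.length : ℝ) ^ j * x _ ^ p.length] using
      hx.sum_pow_mul_pow hl Primrec.list_length hlen j

end Enumeration

section EnergyApproximation

theorem exists_eventually_partialEnergy_bounds {ι : Type*} [Nonempty ι] {ℓ : ι → ℕ} {b r : ℝ}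
    (hb : 0 < b) (hbr : b < r) (hr1 : r ≤ 1) (hr : Summable fun p => r ^ ℓ p)
    {S : ℕ → Finset ι} (hS : Tendsto S atTop atTop) {x y ε : ℕ → ℝ} {C : ℝ} (hC : 0 ≤ C)
    (hε : ∀ k, 0 ≤ ε k) (hx : ∀ k, 0 ≤ x k) (hxb : ∀ k, x k ≤ b) (hby : ∀ k, b ≤ y k)
    (hyx : ∀ k, y k - x k ≤ C * ε k) (hy : Tendsto y atTop (nhds b)) :
    ∃ K > 0, ∀ᶠ k in atTop, (S k).Nonempty ∧
      partialEnergy ℓ (x k) (y k) (S k) ≤ energy ℓ b ∧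
      (∀ p ∉ S k, (ℓ p + 1) * b ^ ℓ p ≤
        K * (energy ℓ b - partialEnergy ℓ (x k) (y k) (S k))) ∧
      energy ℓ b - partialEnergy ℓ (x k) (y k) (S k) ≤
        K * (ε k + (lengthSum ℓ b - ∑ p ∈ S k, ℓ p * b ^ ℓ p)) := by
  classical
  obtain ⟨c, hbc, hcr⟩ := exists_between hbr
  have hZ := summable_pow hr hb.le hbr
  have hW := summable_mul_pow hr hb.le hbr
  have := energy_nonneg (ℓ := ℓ) hb
  let p₀ : ι := Classical.arbitrary ι
  obtain ⟨K, hK, hgap⟩ := exists_energy_sub_partialEnergy_le hr hb hbc.le hcr p₀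
  have hshort := finite_le_of_summable_pow (hb.trans hbr) hr1 hr ⌈2 * energy ℓ b + 1⌉₊
  have hZ0 := partitionSum_pos hb hZ
  refine ⟨2 * partitionSum ℓ b + K * (C + 1), by positivity, ?_⟩
  filter_upwards [hS.eventually_ge_atTop (insert p₀ hshort.toFinset),
    hy.eventually_le_const hbc] with k hSk hyc
  have hp₀ : p₀ ∈ S k := hSk (Finset.mem_insert_self _ _)
  have hlong : ∀ p ∉ S k, 2 * energy ℓ b + 1 ≤ ℓ p := fun p hp => by
    by_contra! hlt
    exact hp (hSk (Finset.mem_insert_of_mem (hshort.mem_toFinset.2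
      (Nat.cast_le.1 (hlt.le.trans (Nat.le_ceil _))))))
  have hle := partialEnergy_le_energy hb hZ hW (hx k) (hxb k) (hby k) ⟨p₀, hp₀⟩
    fun p hp => by linarith [hlong p hp]
  refine ⟨⟨p₀, hp₀⟩, hle, fun p hp => ?_,
    (hgap (S k) (x k) (y k) hp₀ (hx k) (hxb k) (hby k) hyc).trans ?_⟩
  · exact (add_one_mul_pow_le_of_notMem hb hZ hW (hx k) (hxb k) (hby k) ⟨p₀, hp₀⟩ hlong hp).trans
      (mul_le_mul_of_nonneg_right (le_add_of_nonneg_right (by positivity)) (sub_nonneg.2 hle))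
  · have htail := sub_nonneg.2 (sum_mul_pow_le_lengthSum hb.le hW (S k))
    have hsum : (y k - x k) + (lengthSum ℓ b - ∑ p ∈ S k, ℓ p * b ^ ℓ p) ≤
        (C + 1) * (ε k + (lengthSum ℓ b - ∑ p ∈ S k, ℓ p * b ^ ℓ p)) := by
      linarith [hyx k, hε k, mul_nonneg hC htail]
    refine (mul_le_mul_of_nonneg_left hsum hK.le).trans ?_
    rw [← mul_assoc]
    exact mul_le_mul_of_nonneg_right (le_add_of_nonneg_left (by positivity))
      (add_nonneg (hε k) htail)

/-- Computable approximations from below to the energy `E = energy U.programLength b`, with a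
common index: finite sets `stage k` of programs exhausting the domain of `U`, and rationals
`approx k`. A program missing from `stage k` forces a gap between `approx k` and `E`
(`escape`), and conversely the gap is controlled by the programs still missing (`gap_le`).
`delay` is the number of initial stages dropped because these estimates may fail there. -/
structure EnergyApprox (U : Computer) (b : ℝ) where
  stage : ℕ → Finset U.domain
  approx : ℕ → ℝ
  delay : ℕ
  const : ℝ
  monotone_stage : Monotone stage
  exists_mem_stage : ∀ p, ∃ k, p ∈ stage k
  length_lt : ∀ k, ∀ p ∈ stage k, ∀ s ∈ U.f p, s.length < k + delay
  computable_approx : ComputableRatSeq approx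
  computable_mass : ComputableRatSeq fun k => ∑ p ∈ stage k, (1 / 2 : ℝ) ^ U.programLength p
  const_pos : 0 < const
  approx_le : ∀ k, approx k ≤ energy U.programLength b
  escape : ∀ k, ∀ p ∉ stage k, (U.programLength p + 1) * b ^ U.programLength p ≤
    const * (energy U.programLength b - approx k)
  gap_le : ∀ k, energy U.programLength b - approx k ≤
    const * (1 / 2 ^ k + (lengthSum U.programLength b -
      ∑ p ∈ stage k, U.programLength p * b ^ U.programLength p))

theorem HasDyadicApprox.exists_bracket {b : ℝ} (hb : HasDyadicApprox b) :
    ∃ (x y : ℕ → ℝ) (C : ℕ), ComputableRatSeq x ∧ ComputableRatSeq y ∧ (∀ k, 0 ≤ x k) ∧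
      (∀ k, x k ≤ b) ∧ (∀ k, b ≤ y k) ∧ (∀ k, y k - x k = C * (1 / 2 ^ k)) ∧
      Tendsto y atTop (nhds b) := by
  obtain ⟨u, C, hu, huC⟩ := hb
  have hxb (k : ℕ) : u k / 2 ^ k ≤ b := (div_le_iff₀' (by positivity)).2 (huC k).1
  have hby (k : ℕ) : b ≤ (u k + C) / 2 ^ k := (le_div_iff₀' (by positivity)).2 (huC k).2
  have hyx (k : ℕ) : ((u k + C) / 2 ^ k - u k / 2 ^ k : ℝ) = C * (1 / 2 ^ k) := by ring
  have hlim : Tendsto (fun k : ℕ => b + C * (1 / 2 ^ k)) atTop (nhds b) := by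
    simpa using ((tendsto_pow_atTop_nhds_zero_of_lt_one (r := (1 / 2 : ℝ)) (by norm_num)
      (by norm_num)).const_mul (C : ℝ)).const_add b
  exact ⟨_, _, C,
    ⟨u, _, hu, primrec_two_pow.to_comp, fun k => ⟨by positivity, by push_cast; rfl⟩⟩,
    ⟨fun k => u k + C, _, Primrec.nat_add.to_comp.comp hu (Computable.const C),
      primrec_two_pow.to_comp, fun k => ⟨by positivity, by push_cast; rfl⟩⟩,
    fun k => by positivity, hxb, hby, hyx,
    tendsto_of_tendsto_of_tendsto_of_le_of_le tendsto_const_nhds hlim hby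
      fun k => by linarith [hyx k, hxb k]⟩

theorem EnergyApprox.nonempty (U : Computer) [Nonempty U.domain] {b : ℝ} (hb : HasDyadicApprox b)
    (hb0 : 0 < b) (hb1 : b < 1 / 2) : Nonempty (EnergyApprox U b) := by
  obtain ⟨x, y, C, hx_rat, hy_rat, hx, hxb, hby, hyx, hy⟩ := hb.exists_bracket
  obtain ⟨S, hmono, hexh, hout, hrat⟩ := U.exists_exhaustion
  have hr : Summable fun p => (1 / 2 : ℝ) ^ U.programLength p :=
    U.prefixFree.summable_half_pow_length
  obtain ⟨K, hK, hbounds⟩ := exists_eventually_partialEnergy_bounds hb0 hb1 (by norm_num) hr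
    (tendsto_atTop_finset_of_monotone hmono hexh) C.cast_nonneg (ε := fun k => 1 / 2 ^ k)
    (fun k => by positivity) hx hxb hby (fun k => (hyx k).le) hy
  obtain ⟨m, hm⟩ := eventually_atTop.1 hbounds
  have hm (k : ℕ) := hm (k + m) (Nat.le_add_left m k)
  have hshift : Computable fun k : ℕ => k + m :=
    (Primrec.nat_add.comp Primrec.id (Primrec.const m)).to_comp
  have hhalf : ComputableRatSeq fun _ => 1 / 2 :=
    ⟨fun _ => 1, fun _ => 2, Computable.const 1, Computable.const 2, fun k => by norm_num⟩
  exact ⟨{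
    stage := fun k => S (k + m)
    approx := fun k => partialEnergy U.programLength (x (k + m)) (y (k + m)) (S (k + m))
    delay := m
    const := K
    monotone_stage := fun i j hij => hmono (Nat.add_le_add_right hij m)
    exists_mem_stage := fun p => (hexh p).imp fun k hk => hmono (Nat.le_add_right k m) hk
    length_lt := fun k => hout (k + m)
    computable_approx := by
      have hN := (hrat x 1 hx_rat).comp hshift
      have hD := (hrat y 0 hy_rat).comp hshift
      simp only [pow_one, pow_zero, one_mul] at hN hD
      exact hN.div hD fun k => Finset.sum_pos
        (fun p _ => pow_pos (hb0.trans_le (hby _)) _) (hm k).1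
    computable_mass := by simpa using (hrat _ 0 hhalf).comp hshift
    const_pos := hK
    approx_le := fun k => (hm k).2.1
    escape := fun k => (hm k).2.2.1
    gap_le := fun k => (hm k).2.2.2.trans <| by
      gcongr
      · norm_num
      · exact Nat.le_add_right k m }⟩

end EnergyApproximation

namespace EnergyApprox

variable {U : Computer} {b : ℝ}

theorem tendsto_approx (D : EnergyApprox U b) (hb0 : 0 ≤ b) (hb1 : b < 1 / 2) :
    Tendsto D.approx atTop (nhds (energy U.programLength b)) := by
  have hr : Summable fun p => (1 / 2 : ℝ) ^ U.programLength p :=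
    U.prefixFree.summable_half_pow_length
  have hsum : Tendsto (fun k => ∑ p ∈ D.stage k, U.programLength p * b ^ U.programLength p) atTop
      (nhds (lengthSum U.programLength b)) :=
    (summable_mul_pow hr hb0 hb1).hasSum.comp
      (tendsto_atTop_finset_of_monotone D.monotone_stage D.exists_mem_stage)
  have hpow : Tendsto (fun k : ℕ => (1 / 2 ^ k : ℝ)) atTop (nhds 0) := by
    simpa using tendsto_pow_atTop_nhds_zero_of_lt_one (r := (1 / 2 : ℝ)) (by norm_num) (by norm_num)
  have hgap := ((hpow.add (hsum.const_sub (lengthSum U.programLength b))).const_mul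
    D.const).const_sub (energy U.programLength b)
  simp only [sub_self, add_zero, mul_zero, sub_zero] at hgap
  exact tendsto_of_tendsto_of_tendsto_of_le_of_le hgap tendsto_const_nhds
    (fun k => by linarith [D.gap_le k]) D.approx_le

theorem tendsto_mass (D : EnergyApprox U b) :
    Tendsto (fun k => ∑ p ∈ D.stage k, (1 / 2 : ℝ) ^ U.programLength p) atTop
      (nhds (partitionSum U.programLength (1 / 2))) :=
  (U.prefixFree.summable_half_pow_length).hasSum.comp
    (tendsto_atTop_finset_of_monotone D.monotone_stage D.exists_mem_stage)

end EnergyApprox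

section Complexity

variable {U : Computer}

theorem H_le_length {p s : List Bool} (h : s ∈ U.f p) : H U s ≤ p.length :=
  Nat.sInf_le ⟨p, rfl, h⟩

/-- The computer whose only program is the empty string, with output `s`. -/
def Computer.const (s : List Bool) : Computer where
  f p := if p = [] then Part.some s else Part.none
  partrec :=
    (Computable.ofOption (Primrec.ite (Primrec.eq.comp Primrec.id (Primrec.const []))
      (Primrec.const (some s)) (Primrec.const none)).to_comp).of_eq fun p => by
        dsimp only [id]
        split_ifs <;> rfl
  prefixFree p hp q hq _ := by
    have heq_nil {x : List Bool} (hx : (if x = [] then Part.some s else Part.none).Dom) :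
        x = [] := by
      by_contra hne
      simp [hne] at hx
    rw [heq_nil hp, heq_nil hq]

namespace IsOptimal

theorem exists_H_le (hU : IsOptimal U) (C : Computer) :
    ∃ d, ∀ p s, s ∈ C.f p → H U s ≤ p.length + d := by
  obtain ⟨d, hd⟩ := hU C
  refine ⟨d, fun p s hs => ?_⟩
  obtain ⟨q, hq, hsim⟩ := hd p (Part.dom_iff_mem.2 ⟨s, hs⟩)
  exact (H_le_length (hsim s hs)).trans hq

theorem exists_length_eq_H (hU : IsOptimal U) (s : List Bool) :
    ∃ p, p.length = H U s ∧ s ∈ U.f p := by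
  obtain ⟨_, hd⟩ := hU (Computer.const s)
  have hs : s ∈ (Computer.const s).f [] := Part.mem_some s
  obtain ⟨q, _, hsim⟩ := hd [] (Part.dom_iff_mem.2 ⟨s, hs⟩)
  exact Nat.sInf_mem (s := {n | ∃ p : List Bool, p.length = n ∧ s ∈ U.f p}) ⟨_, q, rfl, hsim s hs⟩

theorem nonempty_domain (hU : IsOptimal U) : Nonempty U.domain := by
  obtain ⟨p, _, hp⟩ := hU.exists_length_eq_H []
  exact ⟨p, Part.dom_iff_mem.2 ⟨_, hp⟩⟩

theorem exists_H_le_add (hU : IsOptimal U) {g : List Bool →. List Bool} (hg : Partrec g) :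
    ∃ d, ∀ s t, t ∈ g s → H U t ≤ H U s + d := by
  obtain ⟨d, hd⟩ := hU.exists_H_le
    { f := fun q => (U.f q).bind g
      partrec := U.partrec.bind (hg.comp Computable.snd).to₂
      prefixFree := fun p hp q hq hpq => U.prefixFree p hp.1 q hq.1 hpq }
  refine ⟨d, fun s t ht => ?_⟩
  obtain ⟨q, hq, hs⟩ := hU.exists_length_eq_H s
  exact hq ▸ hd q t (Part.mem_bind hs ht)

end IsOptimal

/-- The computer that reads a program `1 ^ r 0 σ` and outputs `g r σ`, provided that
`σ` consists of `r + 1` blocks of `P` bits. -/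
def Computer.ofBlocks (P : ℕ) (g : ℕ → List Bool →. List Bool) (hg : Partrec₂ g) : Computer where
  f q :=
    if q.length = (P + 1) * (q.idxOf false + 1) then
      g (q.idxOf false) (q.drop (q.idxOf false + 1))
    else Part.none
  partrec := by
    have hidx : Primrec fun q : List Bool => q.idxOf false :=
      Primrec.list_idxOf.comp (Primrec.const false) Primrec.id
    have hsucc : Primrec fun q : List Bool => q.idxOf false + 1 := Primrec.succ.comp hidx
    have hlen : PrimrecPred fun q : List Bool => q.length = (P + 1) * (q.idxOf false + 1) :=
      Primrec.eq.comp Primrec.list_length (Primrec.nat_mul.comp (Primrec.const _) hsucc)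
    have hrun : Partrec fun q : List Bool => g (q.idxOf false) (q.drop (q.idxOf false + 1)) :=
      hg.comp hidx.to_comp (Primrec.list_drop.comp hsucc Primrec.id).to_comp
    refine (Partrec.cond hlen.decide.to_comp hrun Partrec.none).of_eq fun q => ?_
    by_cases hq : q.length = (P + 1) * (q.idxOf false + 1) <;> simp [hq]
  prefixFree := by
    have hlen {x : List Bool} (hx : (if x.length = (P + 1) * (x.idxOf false + 1) then
        g (x.idxOf false) (x.drop (x.idxOf false + 1)) else Part.none).Dom) :
        x.length = (P + 1) * (x.idxOf false + 1) := by
      by_contra hne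
      simp [hne] at hx
    rintro p hp _ hq ⟨t, rfl⟩
    have hfalse : false ∈ p := by
      rw [← List.idxOf_lt_length_iff, hlen hp]
      exact Nat.le_mul_of_pos_left _ P.succ_pos
    refine (List.prefix_append p t).eq_of_length ?_
    rw [hlen hp, hlen hq, List.idxOf_append_of_mem hfalse]

theorem Computer.mem_ofBlocks {P r : ℕ} {g : ℕ → List Bool →. List Bool} {hg : Partrec₂ g}
    {σ t : List Bool} (hσ : σ.length = P * (r + 1)) (ht : t ∈ g r σ) :
    t ∈ (Computer.ofBlocks P g hg).f (List.replicate r true ++ false :: σ) := by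
  have hidx : (List.replicate r true ++ false :: σ).idxOf false = r := by
    rw [List.idxOf_append_of_notMem (by simp [List.mem_replicate])]
    simp
  have hdrop : (List.replicate r true ++ false :: σ).drop (r + 1) = σ := by
    simp [List.drop_append]
  have hlen : (List.replicate r true ++ false :: σ).length = (P + 1) * (r + 1) := by
    simp only [List.length_append, List.length_replicate, List.length_cons, hσ]
    ring
  simpa only [ofBlocks, hidx, hdrop, hlen, if_true] using ht

theorem IsOptimal.exists_H_le_blocks (hU : IsOptimal U) {α : Type*} (F : Finset α) (P : ℕ)
    {g : α → ℕ → List Bool →. List Bool} (hg : ∀ a, Partrec₂ (g a)) :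
    ∃ d, ∀ a ∈ F, ∀ r σ t, σ.length = P * (r + 1) → t ∈ g a r σ →
      H U t ≤ (P + 1) * (r + 1) + d := by
  choose d hd using fun a => hU.exists_H_le (Computer.ofBlocks P (g a) (hg a))
  refine ⟨F.sup d, fun a ha r σ t hσ ht => ?_⟩
  calc H U t ≤ (List.replicate r true ++ false :: σ).length + d a :=
        hd a _ t (Computer.mem_ofBlocks hσ ht)
    _ = (P + 1) * (r + 1) + d a := by
        simp only [List.length_append, List.length_replicate, List.length_cons, hσ]
        ring
    _ ≤ (P + 1) * (r + 1) + F.sup d := Nat.add_le_add_left (Finset.le_sup ha) _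

theorem exists_partrec_search {α β : Type*} [Primcodable α] [Primcodable β] {p : α × ℕ → Bool}
    (hp : Computable p) {g : α × ℕ → β} (hg : Computable g) :
    ∃ f : α →. β, Partrec f ∧
      ∀ a, (∃ k, p (a, k) = true) → ∃ k, p (a, k) = true ∧ g (a, k) ∈ f a := by
  refine ⟨fun a => (Nat.rfind fun k => Part.some (p (a, k))).map fun k => g (a, k),
    (Partrec.rfind hp.partrec.to₂).map hg.to₂, fun a ⟨k, hk⟩ => ?_⟩
  obtain ⟨i, hi, _⟩ := Nat.rfind_min' (p := fun k => p (a, k)) hk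
  exact ⟨i, by simpa using Nat.rfind_spec hi, Part.mem_map _ hi⟩

end Complexity

section Bits

/-- The value of a binary string, most significant bit first. -/
def natOfBits (l : List Bool) : ℕ := l.foldl (fun a c => 2 * a + c.toNat) 0

/-- The `n` lowest binary digits of `B`, most significant bit first. -/
def toBits (n B : ℕ) : List Bool :=
  (List.range n).map fun i => decide (B / 2 ^ (n - 1 - i) % 2 = 1)

theorem primrec_natOfBits : Primrec natOfBits := by
  have hstep : Primrec fun x : List Bool × ℕ × Bool => 2 * x.2.1 + x.2.2.toNat :=
    Primrec.nat_add.comp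
      (Primrec.nat_mul.comp (Primrec.const 2) (Primrec.fst.comp Primrec.snd))
      ((Primrec.dom_finite Bool.toNat).comp (Primrec.snd.comp Primrec.snd))
  exact Primrec.list_foldl Primrec.id (Primrec.const 0) hstep.to₂

theorem primrec_toBits : Primrec₂ toBits := by
  have hexp : Primrec₂ fun (a : ℕ × ℕ) (i : ℕ) => a.1 - 1 - i :=
    Primrec.nat_sub.comp
      (Primrec.nat_sub.comp (Primrec.fst.comp Primrec.fst) (Primrec.const 1)) Primrec.snd
  have hdigit : Primrec₂ fun (a : ℕ × ℕ) (i : ℕ) => a.2 / 2 ^ (a.1 - 1 - i) % 2 :=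
    Primrec.nat_mod.comp₂ (Primrec.nat_div.comp₂ (Primrec.snd.comp Primrec.fst)
      (primrec_two_pow.comp hexp)) (Primrec₂.const 2)
  exact Primrec.list_map (Primrec.list_range.comp Primrec.fst)
    (Primrec.eq.comp hdigit (Primrec.const 1)).decide.to₂

theorem length_toBits (n B : ℕ) : (toBits n B).length = n := by simp [toBits]

theorem length_bits (x : ℝ) (n : ℕ) : (bits x n).length = n := by simp [bits]

theorem toBits_succ (n B : ℕ) : toBits (n + 1) B = toBits n (B / 2) ++ [decide (B % 2 = 1)] := by
  rw [toBits, List.range_succ, List.map_append, toBits]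
  congr 1
  · refine List.map_congr_left fun i hi => ?_
    have hexp : n + 1 - 1 - i = n - 1 - i + 1 := by
      have := List.mem_range.1 hi
      omega
    rw [Nat.div_div_eq_div_mul, ← pow_succ', hexp]
  · simp

theorem natOfBits_toBits (n B : ℕ) : natOfBits (toBits n B) = B % 2 ^ n := by
  induction n generalizing B with
  | zero => simp [toBits, natOfBits, Nat.mod_one]
  | succ n ih =>
    have happend (l : List Bool) (c : Bool) :
        natOfBits (l ++ [c]) = 2 * natOfBits l + c.toNat := by
      simp [natOfBits]
    rw [toBits_succ, happend, ih, pow_succ', Nat.mod_mul]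
    rcases Nat.mod_two_eq_zero_or_one B with h | h <;> simp [h, add_comm]

theorem floor_mul_two_pow_div {x : ℝ} {m n : ℕ} (h : m ≤ n) :
    ⌊x * 2 ^ n⌋₊ / 2 ^ (n - m) = ⌊x * 2 ^ m⌋₊ := by
  rw [← Nat.floor_div_natCast, ← Nat.sub_add_cancel h, pow_add, Nat.add_sub_cancel]
  push_cast
  congr 1
  field_simp

theorem bits_eq_toBits {x : ℝ} (hx : 0 ≤ x) (n : ℕ) : bits x n = toBits n ⌊x * 2 ^ n⌋₊ := by
  refine List.map_congr_left fun i hi => ?_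
  have hi := List.mem_range.1 hi
  have hdiv : ⌊x * 2 ^ n⌋₊ / 2 ^ (n - 1 - i) = ⌊x * 2 ^ (i + 1)⌋₊ := by
    rw [Nat.sub_sub, Nat.add_comm 1 i, floor_mul_two_pow_div hi]
  have hfloor : (⌊x * 2 ^ (i + 1)⌋₊ : ℤ) =
      2 * (⌊x⌋ * 2 ^ i) + ⌊Int.fract x * 2 ^ (i + 1)⌋ := by
    rw [Int.natCast_floor_eq_floor (by positivity), ← Int.floor_intCast_add]
    congr 1
    push_cast
    linear_combination -(2 : ℝ) ^ (i + 1) * Int.floor_add_fract x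
  rw [binDigit, hdiv]
  exact decide_eq_decide.2 (by omega)

theorem floor_mul_two_pow_add_natOfBits_bits {x : ℝ} (hx : 0 ≤ x) (n : ℕ) :
    ⌊x⌋₊ * 2 ^ n + natOfBits (bits x n) = ⌊x * 2 ^ n⌋₊ := by
  have hdiv := floor_mul_two_pow_div (x := x) (Nat.zero_le n)
  rw [pow_zero, mul_one, Nat.sub_zero] at hdiv
  rw [bits_eq_toBits hx, natOfBits_toBits, ← hdiv, Nat.div_add_mod']

end Bits

section Randomness

theorem tendsto_sub_mul_atTop {T K : ℝ} (hT : 0 < T) {h : ℕ → ℕ} {d : ℕ}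
    (hh : ∀ n, ∃ l ≤ h n + d, (l + 1) * ((2 : ℝ) ^ (-1 / T)) ^ l ≤ K * (1 / 2) ^ n) :
    Tendsto (fun n : ℕ => (h n : ℝ) - T * n) atTop atTop := by
  choose l hlh hlK using hh
  have hK : 0 < K := pos_of_mul_pos_left
    ((show (0 : ℝ) < (l 0 + 1) * (2 ^ (-1 / T)) ^ l 0 by positivity).trans_le (hlK 0))
    (by positivity)
  have hlog (n : ℕ) :
      T * (n + (Real.logb 2 (l n + 1) - Real.logb 2 K)) ≤ l n := by
    have hmono := Real.logb_le_logb_of_le one_lt_two (by positivity) (hlK n)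
    rw [Real.logb_mul (by positivity) (by positivity), Real.logb_mul hK.ne' (by positivity),
      Real.logb_pow, Real.logb_pow, Real.logb_rpow two_pos (by norm_num), one_div,
      Real.logb_inv, Real.logb_self_eq_one one_lt_two] at hmono
    calc T * (n + (Real.logb 2 (l n + 1) - Real.logb 2 K)) ≤ T * -(l n * (-1 / T)) := by
          gcongr
          linarith
      _ = l n := by field_simp
  have hlim : Tendsto (fun n => (l n : ℝ)) atTop atTop := by
    refine tendsto_atTop_mono (fun n => ?_)
      ((tendsto_atTop_add_const_right _ (-Real.logb 2 K)
        tendsto_natCast_atTop_atTop).const_mul_atTop hT)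
    have hnonneg : 0 ≤ Real.logb 2 (l n + 1) :=
      Real.logb_nonneg one_lt_two (le_add_of_nonneg_left (l n).cast_nonneg)
    exact (mul_le_mul_of_nonneg_left (by linarith) hT.le).trans (hlog n)
  have hlogb : Tendsto (fun n => Real.logb 2 (l n + 1)) atTop atTop :=
    (Real.tendsto_logb_atTop one_lt_two).comp (tendsto_atTop_add_const_right _ 1 hlim)
  refine tendsto_atTop_mono (fun n => ?_) (tendsto_atTop_add_const_right _ (-(d : ℝ))
    ((tendsto_atTop_add_const_right _ (-Real.logb 2 K) hlogb).const_mul_atTop hT))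
  have hle : (l n : ℝ) ≤ h n + d := by exact_mod_cast hlh n
  linarith [hlog n]

variable {U : Computer} {b : ℝ}

theorem floor_mul_two_pow_le_of_sub_lt {x y : ℝ} {n : ℕ} (hy : 0 ≤ y) (h : y - (1 / 2) ^ n < x) :
    ⌊y * 2 ^ n⌋₊ ≤ ⌊x * 2 ^ n⌋₊ + 1 := by
  have hpow : (1 / 2 : ℝ) ^ n * 2 ^ n = 1 := by rw [← mul_pow]; norm_num
  have hyx := mul_lt_mul_of_pos_right h (show (0 : ℝ) < 2 ^ n by positivity)
  rw [sub_mul, hpow] at hyx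
  have hcast : (⌊y * 2 ^ n⌋₊ : ℝ) < ⌊x * 2 ^ n⌋₊ + 2 := by
    linarith [Nat.floor_le (show 0 ≤ y * 2 ^ n by positivity), Nat.lt_floor_add_one (x * 2 ^ n)]
  exact Nat.le_of_lt_succ (by exact_mod_cast hcast)

theorem sub_le_of_floor_mul_two_pow_le {x y : ℝ} {n : ℕ} (hx : 0 ≤ x)
    (h : ⌊y * 2 ^ n⌋₊ ≤ ⌊x * 2 ^ n⌋₊ + 1) : y - x ≤ 2 * (1 / 2) ^ n := by
  have hcast : (⌊y * 2 ^ n⌋₊ : ℝ) ≤ ⌊x * 2 ^ n⌋₊ + 1 := by exact_mod_cast h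
  rw [one_div_pow, mul_one_div, le_div_iff₀ (by positivity), sub_mul]
  linarith [Nat.floor_le (show 0 ≤ x * 2 ^ n by positivity), Nat.lt_floor_add_one (y * 2 ^ n)]

theorem EnergyApprox.escape_H (D : EnergyApprox U b) (hU : IsOptimal U) (k : ℕ) :
    let l := H U (List.replicate (k + D.delay) true)
    (l + 1) * b ^ l ≤ D.const * (energy U.programLength b - D.approx k) := by
  obtain ⟨p, hp, hmem⟩ := hU.exists_length_eq_H (List.replicate (k + D.delay) true)
  -- No program in `stage k` has an output this long.
  have hescape := D.escape k ⟨p, Part.dom_iff_mem.2 ⟨_, hmem⟩⟩ fun hin => by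
    simpa using D.length_lt k _ hin _ hmem
  simpa only [← hp] using hescape

theorem EnergyApprox.exists_partrec_of_bits (D : EnergyApprox U b) (hb0 : 0 < b)
    (hb1 : b < 1 / 2) :
    ∃ f : List Bool →. List Bool, Partrec f ∧ ∀ n, ∃ k,
      energy U.programLength b - D.approx k ≤ 2 * (1 / 2) ^ n ∧
      List.replicate (k + D.delay) true ∈ f (bits (energy U.programLength b) n) := by
  set E := energy U.programLength b
  have hE0 : 0 ≤ E := energy_nonneg hb0
  have htest : Computable fun x : List Bool × ℕ => decide
      (⌊E⌋₊ * 2 ^ x.1.length + natOfBits x.1 ≤ ⌊D.approx x.2 * 2 ^ x.1.length⌋₊ + 1) := by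
    have hA : Computable fun x : List Bool × ℕ => ⌊E⌋₊ * 2 ^ x.1.length + natOfBits x.1 :=
      (Primrec.nat_add.comp (Primrec.nat_mul.comp (Primrec.const _)
        (primrec_two_pow.comp (Primrec.list_length.comp Primrec.fst)))
        (primrec_natOfBits.comp Primrec.fst)).to_comp
    have hG : Computable fun x : List Bool × ℕ => ⌊D.approx x.2 * 2 ^ x.1.length⌋₊ + 1 :=
      Computable.succ.comp (D.computable_approx.computable₂_floor_mul_two_pow.comp
        Computable.snd (Computable.list_length.comp Computable.fst))
    exact Primrec.nat_le.decide.to_comp.comp hA hG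
  have hout : Computable fun x : List Bool × ℕ => List.replicate (x.2 + D.delay) true :=
    ((Primrec.list_map (Primrec.list_range.comp (Primrec.nat_add.comp Primrec.snd
      (Primrec.const D.delay))) (Primrec₂.const true)).to_comp).of_eq fun x => by simp
  obtain ⟨f, hf, hsearch⟩ := exists_partrec_search htest hout
  refine ⟨f, hf, fun n => ?_⟩
  specialize hsearch (bits E n)
  simp only [length_bits, floor_mul_two_pow_add_natOfBits_bits hE0, decide_eq_true_eq] at hsearch
  obtain ⟨k, hk, hmem⟩ := hsearch <| by
    obtain ⟨k, hk⟩ := ((D.tendsto_approx hb0.le hb1).eventually_const_lt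
      (sub_lt_self E (show (0 : ℝ) < (1 / 2) ^ n by positivity))).exists
    exact ⟨k, floor_mul_two_pow_le_of_sub_lt hE0 hk⟩
  exact ⟨k, sub_le_of_floor_mul_two_pow_le (D.computable_approx.nonneg k) hk, hmem⟩

theorem EnergyApprox.chaitinRandom {T : ℝ} (D : EnergyApprox U (2 ^ (-1 / T))) (hU : IsOptimal U)
    (hT : 0 < T) (hT1 : (2 : ℝ) ^ (-1 / T) < 1 / 2) :
    ChaitinRandom U T (energy U.programLength (2 ^ (-1 / T))) := by
  obtain ⟨f, hf, hspec⟩ := D.exists_partrec_of_bits (by positivity) hT1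
  obtain ⟨d, hd⟩ := hU.exists_H_le_add hf
  refine tendsto_sub_mul_atTop (K := D.const * 2) (d := d) hT fun n => ?_
  obtain ⟨k, hgap, hmem⟩ := hspec n
  refine ⟨_, hd _ _ hmem, (D.escape_H hU k).trans ?_⟩
  rw [mul_assoc]
  exact mul_le_mul_of_nonneg_left hgap D.const_pos.le

end Randomness

section Compressibility

variable {U : Computer} {b : ℝ}

theorem EnergyApprox.exists_gap_le (D : EnergyApprox U b) {β : ℝ} (hb0 : 0 < b) (hbβ : b < β)
    (hβ : β ≤ 1 / 2) :
    ∃ K : ℝ, ∀ k n m : ℕ, n ≤ k → β ^ m ≤ (1 / 2) ^ n →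
      partitionSum U.programLength (1 / 2) -
        ∑ p ∈ D.stage k, (1 / 2 : ℝ) ^ U.programLength p ≤ (1 / 2) ^ m →
      energy U.programLength b - D.approx k ≤ K * (1 / 2) ^ n := by
  obtain ⟨K, hK, htail⟩ := exists_lengthSum_sub_sum_le (ℓ := U.programLength) hb0 hbβ hβ
    (by norm_num) U.prefixFree.summable_half_pow_length
  refine ⟨D.const * (1 + K), fun k n m hnk hmn hmass => (D.gap_le k).trans ?_⟩
  rw [mul_assoc]
  refine mul_le_mul_of_nonneg_left ?_ D.const_pos.le
  calc 1 / 2 ^ k + (lengthSum U.programLength b -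
        ∑ p ∈ D.stage k, U.programLength p * b ^ U.programLength p)
      ≤ (1 / 2) ^ n + K * (1 / 2) ^ n := by
        refine add_le_add ?_ ((htail _ m hmass).trans (mul_le_mul_of_nonneg_left hmn hK.le))
        rw [← one_div_pow]
        exact pow_le_pow_of_le_one (by norm_num) (by norm_num) hnk
    _ = (1 + K) * (1 / 2) ^ n := by ring

theorem exists_toBits_le_mul_two_pow {x : ℝ} (hx0 : 0 < x) (hx1 : x ≤ 1) (m : ℕ) :
    ∃ σ : List Bool, σ.length = m ∧ natOfBits σ < x * 2 ^ m ∧ x * 2 ^ m ≤ natOfBits σ + 1 := by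
  have hpos : 0 < x * 2 ^ m := by positivity
  obtain ⟨A, hA⟩ := Nat.exists_eq_succ_of_ne_zero (Nat.ceil_pos.2 hpos).ne'
  have hlower : (A : ℝ) < x * 2 ^ m := Nat.lt_ceil.1 (hA ▸ A.lt_succ_self)
  have hupper : x * 2 ^ m ≤ A + 1 := by
    simpa only [hA, Nat.succ_eq_add_one, Nat.cast_add_one] using Nat.le_ceil (x * 2 ^ m)
  have hA2 : A < 2 ^ m := by
    exact_mod_cast hlower.trans_le (mul_le_of_le_one_left (by positivity) hx1)
  refine ⟨toBits m A, length_toBits m A, ?_⟩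
  rw [natOfBits_toBits, Nat.mod_eq_of_lt hA2]
  exact ⟨hlower, hupper⟩

/-- The first `m` bits of the halting probability determine a stage that misses at most `2 ^ (-m)`
of it. -/
theorem EnergyApprox.exists_partrec_stage [Nonempty U.domain] (D : EnergyApprox U b) :
    ∃ f : ℕ × List Bool →. ℕ, Partrec f ∧ ∀ n m, ∃ σ : List Bool, σ.length = m ∧
      ∃ k ∈ f (n, σ), n ≤ k ∧ partitionSum U.programLength (1 / 2) -
        ∑ p ∈ D.stage k, (1 / 2 : ℝ) ^ U.programLength p ≤ (1 / 2) ^ m := by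
  set mass : ℕ → ℝ := fun k => ∑ p ∈ D.stage k, (1 / 2 : ℝ) ^ U.programLength p
  have htest : Computable fun x : (ℕ × List Bool) × ℕ => decide
      (x.1.1 ≤ x.2) && decide (natOfBits x.1.2 ≤ ⌊mass x.2 * 2 ^ x.1.2.length⌋₊) := by
    have hσ : Computable fun x : (ℕ × List Bool) × ℕ => x.1.2 := Computable.snd.comp Computable.fst
    exact Primrec.and.to_comp.comp
      (Primrec.nat_le.decide.to_comp.comp (Computable.fst.comp Computable.fst) Computable.snd)
      (Primrec.nat_le.decide.to_comp.comp (primrec_natOfBits.to_comp.comp hσ)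
        (D.computable_mass.computable₂_floor_mul_two_pow.comp Computable.snd
          (Computable.list_length.comp hσ)))
  obtain ⟨f, hf, hsearch⟩ := exists_partrec_search htest Computable.snd
  refine ⟨f, hf, fun n m => ?_⟩
  have hsummable : Summable fun p => (1 / 2 : ℝ) ^ U.programLength p :=
    U.prefixFree.summable_half_pow_length
  obtain ⟨σ, hσ, hlower, hupper⟩ := exists_toBits_le_mul_two_pow
    (partitionSum_pos (by norm_num) hsummable) U.prefixFree.tsum_half_pow_length_le_one m
  specialize hsearch (n, σ)
  simp only [hσ, Bool.and_eq_true, decide_eq_true_eq] at hsearch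
  obtain ⟨k, ⟨hnk, hk⟩, hmem⟩ := hsearch <| by
    have hev := D.tendsto_mass.eventually_const_lt ((div_lt_iff₀ (by positivity)).2 hlower)
    obtain ⟨k, hk, hnk⟩ := (hev.and (eventually_ge_atTop n)).exists
    exact ⟨k, hnk, Nat.le_floor ((div_lt_iff₀ (by positivity)).1 hk).le⟩
  refine ⟨σ, hσ, k, hmem, hnk, ?_⟩
  have hmass0 : 0 ≤ mass k := D.computable_mass.nonneg k
  have hkσ : (natOfBits σ : ℝ) ≤ mass k * 2 ^ m :=
    (Nat.cast_le.2 hk).trans (Nat.floor_le (by positivity))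
  rw [one_div_pow, le_div_iff₀ (by positivity), sub_mul]
  linarith

theorem exists_le_floor_mul_two_pow_eq_add {x y C : ℝ} {n : ℕ} (hx : 0 ≤ x) (hxy : x ≤ y)
    (h : y - x ≤ C * (1 / 2) ^ n) : ∃ e ≤ ⌈C⌉₊, ⌊y * 2 ^ n⌋₊ = ⌊x * 2 ^ n⌋₊ + e := by
  have hy : 0 ≤ y := hx.trans hxy
  obtain ⟨e, he⟩ := Nat.exists_eq_add_of_le
    (Nat.floor_le_floor (mul_le_mul_of_nonneg_right hxy (show (0 : ℝ) ≤ 2 ^ n by positivity)))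
  refine ⟨e, Nat.le_of_lt_succ ?_, he⟩
  rw [one_div_pow, mul_one_div, le_div_iff₀ (by positivity), sub_mul] at h
  have hfloor := Nat.floor_le (show 0 ≤ y * 2 ^ n by positivity)
  rw [he, Nat.cast_add] at hfloor
  have hcast : (e : ℝ) < ⌈C⌉₊ + 1 := by
    linarith [Nat.lt_floor_add_one (x * 2 ^ n), Nat.le_ceil C]
  exact_mod_cast hcast

theorem EnergyApprox.exists_H_bits_le (D : EnergyApprox U b) (hU : IsOptimal U) (hb0 : 0 < b)
    {N P : ℕ} (hN : 0 < N) {β : ℝ} (hbβ : b < β) (hβ : β ≤ 1 / 2) (hβP : β ^ P = (1 / 2) ^ N) :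
    ∃ c, ∀ n, H U (bits (energy U.programLength b) n) ≤ (P + 1) * (n / N + 1) + c := by
  have := hU.nonempty_domain
  obtain ⟨K, hK⟩ := D.exists_gap_le hb0 hbβ hβ
  obtain ⟨f, hf, hstage⟩ := D.exists_partrec_stage
  have hdecode (a : ℕ × ℕ) : Partrec₂ fun (r : ℕ) (σ : List Bool) =>
      (f (N * r + a.1, σ)).map fun k =>
        toBits (N * r + a.1) (⌊D.approx k * 2 ^ (N * r + a.1)⌋₊ + a.2) := by
    have hn : Primrec fun x : ℕ × List Bool => N * x.1 + a.1 :=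
      Primrec.nat_add.comp (Primrec.nat_mul.comp (Primrec.const N) Primrec.fst) (Primrec.const _)
    have hn' := hn.to_comp.comp (Computable.fst (α := ℕ × List Bool) (β := ℕ))
    exact (hf.comp (hn.to_comp.pair Computable.snd)).map
      (primrec_toBits.to_comp.comp hn' (Primrec.nat_add.to_comp.comp
        (D.computable_approx.computable₂_floor_mul_two_pow.comp Computable.snd hn')
        (Computable.const a.2))).to₂
  obtain ⟨c, hc⟩ := hU.exists_H_le_blocks (Finset.range N ×ˢ Finset.range (⌈K⌉₊ + 1)) P hdecode
  refine ⟨c, fun n => ?_⟩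
  have hn : N * (n / N) + n % N = n := Nat.div_add_mod n N
  obtain ⟨σ, hσ, k, hk, hnk, hmass⟩ := hstage n (P * (n / N + 1))
  have hpow : β ^ (P * (n / N + 1)) ≤ (1 / 2) ^ n := by
    rw [pow_mul, hβP, ← pow_mul]
    exact pow_le_pow_of_le_one (by norm_num) (by norm_num) (Nat.lt_mul_div_succ n hN).le
  obtain ⟨e, heK, he⟩ := exists_le_floor_mul_two_pow_eq_add (D.computable_approx.nonneg k)
    (D.approx_le k) (hK k n _ hnk hpow hmass)
  refine hc (n % N, e) (Finset.mem_product.2 ⟨Finset.mem_range.2 (Nat.mod_lt n hN),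
    Finset.mem_range.2 (Nat.lt_succ_of_le heK)⟩) (n / N) σ _ hσ ?_
  simp only [hn]
  rw [bits_eq_toBits (energy_nonneg hb0), he]
  exact Part.mem_map _ hk

theorem exists_pow_eq_half_pow {T : ℝ} (hT : 0 < T) {N P : ℕ} (hTP : T * N < P) (hPN : P ≤ N) :
    ∃ β : ℝ, 2 ^ (-1 / T) < β ∧ β ≤ 1 / 2 ∧ β ^ P = (1 / 2) ^ N := by
  have hP : (0 : ℝ) < P := (by positivity : (0 : ℝ) ≤ T * N).trans_lt hTP
  refine ⟨2 ^ (-(N : ℝ) / P), ?_, ?_, ?_⟩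
  · refine Real.rpow_lt_rpow_of_exponent_lt one_lt_two ?_
    rw [div_lt_div_iff₀ hT hP]
    linarith
  · rw [one_div, ← Real.rpow_neg_one]
    refine Real.rpow_le_rpow_of_exponent_le one_le_two ?_
    rw [div_le_iff₀ hP, neg_one_mul]
    exact neg_le_neg (Nat.cast_le.2 hPN)
  · rw [← Real.rpow_mul_natCast two_pos.le, div_mul_cancel₀ _ hP.ne', Real.rpow_neg two_pos.le,
      Real.rpow_natCast, one_div, inv_pow]

theorem limsup_div_le {h : ℕ → ℕ} {a c N : ℕ} (hh : ∀ n, h n ≤ a * (n / N + 1) + c) :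
    limsup (fun n : ℕ => (h n : ℝ) / n) atTop ≤ a / N := by
  have hlim : Tendsto (fun n : ℕ => (a / N + (a + c) / n : ℝ)) atTop (nhds (a / N)) := by
    simpa using (tendsto_const_div_atTop_nhds_zero_nat (a + c : ℝ)).const_add (a / N : ℝ)
  rw [← hlim.limsup_eq]
  refine limsup_le_limsup ?_ (IsBoundedUnder.isCoboundedUnder_le
    (isBoundedUnder_of ⟨0, fun n => by positivity⟩)) hlim.isBoundedUnder_le
  filter_upwards [eventually_gt_atTop 0] with n hn
  have hn : (0 : ℝ) < n := Nat.cast_pos.2 hn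
  have hcast : (h n : ℝ) ≤ a * ((n / N : ℕ) + 1) + c := by exact_mod_cast hh n
  rw [div_le_iff₀ hn]
  calc (h n : ℝ) ≤ a * (n / N + 1) + c := hcast.trans (by gcongr; exact Nat.cast_div_le)
    _ = (a / N + (a + c) / n) * n := by
      rw [add_mul, div_mul_cancel₀ _ hn.ne']
      ring

theorem EnergyApprox.dCompressible {T : ℝ} (D : EnergyApprox U (2 ^ (-1 / T))) (hU : IsOptimal U)
    (hT0 : 0 < T) (hT1 : T < 1) : DCompressible U T (energy U.programLength (2 ^ (-1 / T))) := by
  have hlim : Tendsto (fun N : ℕ => T + 2 / N) atTop (nhds T) := by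
    simpa using (tendsto_const_div_atTop_nhds_zero_nat 2).const_add T
  refine ge_of_tendsto hlim ?_
  filter_upwards [eventually_gt_atTop 0] with N hN
  have hN' : (0 : ℝ) < N := Nat.cast_pos.2 hN
  have hfloor : ⌊T * N⌋₊ < N :=
    (Nat.floor_lt (by positivity)).2 (mul_lt_of_lt_one_left hN' hT1)
  obtain ⟨β, hbβ, hβ, hβP⟩ := exists_pow_eq_half_pow hT0 (P := ⌊T * N⌋₊ + 1)
    (by exact_mod_cast Nat.lt_floor_add_one (T * N)) hfloor
  obtain ⟨c, hc⟩ := D.exists_H_bits_le hU (by positivity) hN hbβ hβ hβP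
  calc limsup (fun n : ℕ => (H U (bits (energy U.programLength (2 ^ (-1 / T))) n) : ℝ) / n) atTop
      ≤ (⌊T * N⌋₊ + 1 + 1 : ℕ) / N := limsup_div_le hc
    _ ≤ (T * N + 2) / N := by
        gcongr
        push_cast
        linarith [Nat.floor_le (show 0 ≤ T * N by positivity)]
    _ = T + 2 / N := by rw [add_div, mul_div_cancel_right₀ _ hN'.ne']

end Compressibility

theorem two_rpow_neg_one_div_lt_half {T : ℝ} (hT0 : 0 < T) (hT1 : T < 1) :
    (2 : ℝ) ^ (-1 / T) < 1 / 2 := by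
  rw [one_div, ← Real.rpow_neg_one]
  refine Real.rpow_lt_rpow_of_exponent_lt one_lt_two ?_
  rw [div_lt_iff₀ hT0]
  linarith

theorem zterm_eq (U : Computer) (T : ℝ) :
    zterm U T = fun p => ((2 : ℝ) ^ (-1 / T)) ^ U.programLength p := by
  funext p
  rw [zterm, ← Real.rpow_mul_natCast two_pos.le]
  ring_nf

theorem wlterm_eq (U : Computer) (T : ℝ) :
    wlterm U T = fun p => (U.programLength p : ℝ) * ((2 : ℝ) ^ (-1 / T)) ^ U.programLength p := by
  funext p
  rw [wlterm, ← zterm, zterm_eq]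

/-- **Theorem (paper Thm 10(i)).** For computable `T` with `0 < T < 1`, `Z(T)`
and `W(1,T)` converge, `Z(T) > 0`, and the energy `E(T) = W(1,T)/Z(T)` is a
left-computable real which is Chaitin `T`-random and `T`-compressible. -/
theorem energy_random_compressible (U : Computer) (hU : IsOptimal U)
    (T : ℝ) (hT0 : 0 < T) (hT1 : T < 1) (hTc : ComputableReal T) :
    Summable (zterm U T) ∧
    Summable (wlterm U T) ∧
    0 < ∑' p, zterm U T p ∧
    LeftComputable ((∑' p, wlterm U T p) / (∑' p, zterm U T p)) ∧
    ChaitinRandom U T ((∑' p, wlterm U T p) / (∑' p, zterm U T p)) ∧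
    DCompressible U T ((∑' p, wlterm U T p) / (∑' p, zterm U T p)) := by
  have hb0 : (0 : ℝ) < 2 ^ (-1 / T) := by positivity
  have hb1 := two_rpow_neg_one_div_lt_half hT0 hT1
  have hkraft : Summable fun p => (1 / 2 : ℝ) ^ U.programLength p :=
    U.prefixFree.summable_half_pow_length
  have hZ := summable_pow hkraft hb0.le hb1
  have := hU.nonempty_domain
  obtain ⟨D⟩ := EnergyApprox.nonempty U ((hTc.hasDyadicApprox hT0.le).two_rpow_neg_one_div hT0)
    hb0 hb1
  rw [zterm_eq, wlterm_eq]
  exact ⟨hZ, summable_mul_pow hkraft hb0.le hb1, partitionSum_pos hb0 hZ,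
    D.computable_approx.leftComputable D.approx_le (D.tendsto_approx hb0.le hb1),
    D.chaitinRandom hU hT0 hb1, D.dCompressible hU hT0 hT1⟩
end

section
/- Let T be a real number with T ≥ 1, and let q₁, q₂, q₃, … be any enumeration (a bijection from ℕ⁺) of the countably infinite set dom U. Then the finite-stage energies E_n(T) = (∑_{i=1}^n |q_i|·2^{−|q_i|/T}) / (∑_{i=1}^n 2^{−|q_i|/T}) diverge to ∞ as n → ∞. -/
open Filter

/-!
If the weights `w i ≥ 0` satisfy `∑ a i * w i = ∞` with `0 ≤ a i → ∞`, then `w = o(a * w)`, a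
relation inherited by partial sums, so the weighted averages of `a` tend to infinity. It remains to
see that `∑ |p| * 2 ^ (-|p|)` diverges over `dom U`. For this, consider the prefix-free code of all
strings `1ʲ 0 v` with `|v| = 2 ^ j`: its `j`-th block has `2 ^ |v|` members of length at least `|v|`
and so contributes at least `2 ^ |v| * |v| * 2 ^ (-(j + 1 + |v|)) = 1 / 2`. By optimality, `U`
simulates the identity on this code with a bounded increase in length, and `n / 2 ^ n` does not
increase for `n ≥ 1`, so the divergence passes to `dom U`.
-/

section WeightedAverage

open Asymptotics Finset

theorem tendsto_weighted_average_atTop {a w : ℕ → ℝ} (ha : Tendsto a atTop atTop)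
    (ha₀ : ∀ i, 0 ≤ a i) (hw₀ : ∀ i, 0 ≤ w i) (haw : ¬ Summable fun i => a i * w i) :
    Tendsto (fun n => (∑ i ∈ range n, a i * w i) / ∑ i ∈ range n, w i) atTop atTop := by
  have haw₀ i : 0 ≤ a i * w i := mul_nonneg (ha₀ i) (hw₀ i)
  have hsum := (not_summable_iff_tendsto_nat_atTop_of_nonneg haw₀).1 haw
  have hlittle : w =o[atTop] fun i => a i * w i := by
    have hone : (fun _ => (1 : ℝ)) =o[atTop] a :=
      (isLittleO_one_left_iff ℝ).2 (tendsto_norm_atTop_atTop.comp ha)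
    simpa only [one_mul] using hone.mul_isBigO (isBigO_refl w atTop)
  have hratio := (hlittle.sum_range haw₀ hsum).tendsto_div_nhds_zero
  have hpos : ∀ᶠ n in atTop, 0 < (∑ i ∈ range n, w i) / ∑ i ∈ range n, a i * w i := by
    filter_upwards [hsum.eventually_gt_atTop 0] with n hn
    obtain ⟨i, hi, hne⟩ := exists_ne_zero_of_sum_ne_zero hn.ne'
    have hwi : 0 < w i := (hw₀ i).lt_of_ne' (right_ne_zero_of_mul hne)
    exact div_pos (sum_pos' (fun j _ => hw₀ j) ⟨i, hi, hwi⟩) hn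
  refine (tendsto_nhdsWithin_iff.2 ⟨hratio, hpos⟩).inv_tendsto_nhdsGT_zero.congr fun n => ?_
  simp only [Pi.inv_apply, inv_div]

end WeightedAverage

theorem summable_subtype_of_subset_range {ι β E : Type*} [AddCommGroup E] [UniformSpace E]
    [IsUniformAddGroup E] [CompleteSpace E] {f : β → E} {q : ι → β} {s : Set β}
    (hs : s ⊆ Set.range q) (hf : Summable (f ∘ q)) : Summable fun x : s => f x := by
  choose g hg using fun x : s => hs x.2
  have hinj : Function.Injective g := fun x y hxy => Subtype.ext <| by rw [← hg x, hxy, hg y]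
  exact (hf.comp_injective hinj).congr fun x => congrArg f (hg x)

theorem tendsto_list_length_cofinite {α : Type*} [Finite α] :
    Tendsto (List.length : List α → ℕ) cofinite atTop :=
  tendsto_atTop.2 fun n => by
    simpa only [eventually_cofinite, not_le] using List.finite_length_lt α n

theorem antitoneOn_div_two_pow : AntitoneOn (fun n : ℕ => (n : ℝ) / 2 ^ n) (Set.Ici 1) := by
  refine antitoneOn_nat_Ici_of_succ_le fun n hn => ?_
  have hn' : (1 : ℝ) ≤ n := mod_cast hn
  rw [div_le_div_iff₀ (by positivity) (by positivity), pow_succ]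
  push_cast
  nlinarith [pow_pos (two_pos : (0 : ℝ) < 2) n]

section HeaderCode

/-- The self-delimiting code with header lengths `h`: the strings `1ʲ 0 v` with `|v| = h j`. The
header length `j` is read off a string as the index of its first `false`; a string without `false`
has index equal to its length, which the length condition rules out. -/
def headerCode (h : ℕ → ℕ) : Set (List Bool) :=
  {p | p.length = p.idxOf false + 1 + h (p.idxOf false)}

/-- The element `1ʲ 0 v` of `headerCode h`, for `v` of length `h j`. -/
def headerCodeword (h : ℕ → ℕ) (x : Σ j, List.Vector Bool (h j)) : List Bool :=
  List.replicate x.1 true ++ false :: x.2.toList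

variable {h : ℕ → ℕ}

theorem prefixFree_headerCode : PrefixFree (headerCode h) := by
  rintro p hp _ hq ⟨t, rfl⟩
  simp only [headerCode, Set.mem_ofPred_eq] at hp hq
  have hmem : false ∈ p := List.idxOf_lt_length_iff.1 (by lia)
  rw [List.idxOf_append_of_mem hmem, ← hp, List.length_append] at hq
  simp [List.eq_nil_of_length_eq_zero (Nat.add_eq_left.1 hq)]

theorem computablePred_mem_headerCode (hh : Computable h) :
    ComputablePred (· ∈ headerCode h) := by
  have hidx : Computable fun p : List Bool => p.idxOf false :=
    (Primrec.list_idxOf.comp (Primrec.const false) Primrec.id).to_comp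
  have hlen : Computable fun p : List Bool => p.idxOf false + 1 + h (p.idxOf false) :=
    Primrec.nat_add.to_comp.comp (Computable.succ.comp hidx) (hh.comp hidx)
  exact ⟨fun p => inferInstanceAs (Decidable (p.length = _)),
    Primrec.eq.decide.to_comp.comp Computable.list_length hlen⟩

theorem idxOf_headerCodeword (x : Σ j, List.Vector Bool (h j)) :
    (headerCodeword h x).idxOf false = x.1 := by
  simp [headerCodeword, List.idxOf_append]

theorem length_headerCodeword (x : Σ j, List.Vector Bool (h j)) :
    (headerCodeword h x).length = x.1 + 1 + h x.1 := by
  simp only [headerCodeword, List.length_append, List.length_replicate, List.length_cons,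
    List.Vector.toList_length]
  lia

theorem headerCodeword_mem (x : Σ j, List.Vector Bool (h j)) :
    headerCodeword h x ∈ headerCode h := by
  simp only [headerCode, Set.mem_ofPred_eq, length_headerCodeword, idxOf_headerCodeword]

theorem headerCodeword_injective : Function.Injective (headerCodeword h) := by
  rintro ⟨j, v⟩ ⟨k, w⟩ heq
  obtain rfl : j = k := by
    simpa only [idxOf_headerCodeword] using congrArg (List.idxOf false) heq
  simpa [headerCodeword, List.Vector.toList_injective.eq_iff] using heq

theorem summable_two_pow_mul_of_summable_headerCode {φ : ℕ → ℝ}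
    (hφ : Summable fun p : headerCode h => φ (p : List Bool).length) :
    Summable fun j => 2 ^ h j * φ (j + 1 + h j) := by
  have hinj : Function.Injective fun x => (⟨headerCodeword h x, headerCodeword_mem x⟩ :
      headerCode h) := headerCodeword_injective.codRestrict headerCodeword_mem
  refine (hφ.comp_injective hinj).sigma.congr fun j => ?_
  simp [length_headerCodeword, card_vector]

theorem not_summable_length_add_div_two_pow_headerCode (d : ℕ) :
    ¬ Summable fun p : headerCode (2 ^ ·) =>
      (((p : List Bool).length + d : ℕ) : ℝ) / 2 ^ ((p : List Bool).length + d) := by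
  intro hsum
  have hblocks := (summable_two_pow_mul_of_summable_headerCode
    (φ := fun n => ((n + d : ℕ) : ℝ) / 2 ^ (n + d)) hsum).tendsto_atTop_zero
  have hpos : (0 : ℝ) < 1 / 2 ^ (1 + d) := by positivity
  refine hpos.not_ge (ge_of_tendsto' hblocks fun j => ?_)
  calc (1 : ℝ) / 2 ^ (1 + d)
      = 2 ^ 2 ^ j * (2 ^ j / 2 ^ (j + 1 + 2 ^ j + d)) := by field_simp; ring
    _ ≤ 2 ^ 2 ^ j * (((j + 1 + 2 ^ j + d : ℕ) : ℝ) / 2 ^ (j + 1 + 2 ^ j + d)) := by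
      gcongr
      exact_mod_cast (by lia : 2 ^ j ≤ j + 1 + 2 ^ j + d)

end HeaderCode

/-- The computer that outputs its program, run on the programs of a recursively enumerable
prefix-free set `S`. -/
def Computer.idOn (S : Set (List Bool)) (hS : REPred (· ∈ S)) (hpf : PrefixFree S) : Computer where
  f := PFun.res id S
  partrec := (hS.map Computable.fst.to₂).of_eq fun p => by
    ext s
    simp [PFun.mem_res]
  prefixFree := hpf

namespace IsOptimal

variable {U : Computer}

theorem exists_injective_length_le (hU : IsOptimal U) {S : Set (List Bool)}
    (hS : REPred (· ∈ S)) (hpf : PrefixFree S) :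
    ∃ (d : ℕ) (g : S → U.domain), Function.Injective g ∧
      ∀ p, (g p : List Bool).length ≤ (p : List Bool).length + d := by
  obtain ⟨d, hd⟩ := hU (Computer.idOn S hS hpf)
  choose g hlen hg using fun p : S => hd p p.2
  have hout (p : S) : (p : List Bool) ∈ U.f (g p) :=
    hg p p ((PFun.mem_res id S p p).2 ⟨p.2, rfl⟩)
  refine ⟨d, fun p => ⟨g p, Part.dom_iff_mem.2 ⟨p, hout p⟩⟩, fun p r hpr => ?_, hlen⟩
  have hgpr : g p = g r := congrArg Subtype.val hpr
  exact Subtype.ext (Part.mem_unique (hout p) (hgpr ▸ hout r))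

theorem exists_summable_length_add (hU : IsOptimal U) {S : Set (List Bool)}
    (hS : REPred (· ∈ S)) (hpf : PrefixFree S) {φ : ℕ → ℝ} (hφ₀ : ∀ n, 0 ≤ φ n) {k : ℕ}
    (hφ : AntitoneOn φ (Set.Ici k))
    (hsum : Summable fun p : U.domain => φ (p : List Bool).length) :
    ∃ d, Summable fun p : S => φ ((p : List Bool).length + d) := by
  obtain ⟨d, g, hg, hlen⟩ := hU.exists_injective_length_le hS hpf
  have hlarge : ∀ᶠ p in cofinite, k ≤ (g p : List Bool).length :=
    (tendsto_list_length_cofinite.comp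
      (Subtype.val_injective.comp hg).tendsto_cofinite).eventually_ge_atTop k
  refine ⟨d, (hsum.comp_injective hg).of_norm_bounded_eventually ?_⟩
  filter_upwards [hlarge] with p hp
  rw [Real.norm_of_nonneg (hφ₀ _)]
  exact hφ hp (hp.trans (hlen p)) (hlen p)

theorem not_summable_length_div_two_pow (hU : IsOptimal U) :
    ¬ Summable fun p : U.domain => ((p : List Bool).length : ℝ) / 2 ^ (p : List Bool).length := by
  intro hsum
  have hre : REPred (· ∈ headerCode (2 ^ ·)) := (computablePred_mem_headerCode
    (Primrec₂.unpaired'.1 Nat.Primrec.pow |>.comp (.const 2) .id).to_comp).to_re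
  obtain ⟨d, hd⟩ := hU.exists_summable_length_add hre prefixFree_headerCode
    (fun n => by positivity) antitoneOn_div_two_pow hsum
  exact not_summable_length_add_div_two_pow_headerCode d hd

theorem not_summable_wlterm (hU : IsOptimal U) {T : ℝ} (hT : 1 ≤ T) :
    ¬ Summable (wlterm U T) := by
  refine fun hsum => hU.not_summable_length_div_two_pow <|
    hsum.of_nonneg_of_le (fun p => by positivity) fun p => ?_
  rw [wlterm, div_eq_mul_inv, ← Real.rpow_natCast, ← Real.rpow_neg zero_le_two, neg_div]
  gcongr
  · exact one_le_two
  · exact div_le_self (Nat.cast_nonneg _) hT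

end IsOptimal

theorem finite_stage_energy_tendsto_atTop_general {U : Computer} (hU : IsOptimal U) {T : ℝ}
    (hT : 1 ≤ T) {q : ℕ → List Bool} (hlen : Tendsto (fun n => (q n).length) atTop atTop)
    (hcover : U.domain ⊆ Set.range q) :
    Tendsto (fun n : ℕ =>
      (∑ i ∈ Finset.range n,
        ((q i).length : ℝ) * (2 : ℝ) ^ (-((q i).length : ℝ) / T)) /
      (∑ i ∈ Finset.range n, (2 : ℝ) ^ (-((q i).length : ℝ) / T)))
      atTop atTop := by
  have hdiv : ¬ Summable fun i =>
      ((q i).length : ℝ) * (2 : ℝ) ^ (-((q i).length : ℝ) / T) := fun hsum =>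
    hU.not_summable_wlterm hT <| summable_subtype_of_subset_range
      (f := fun p : List Bool => (p.length : ℝ) * (2 : ℝ) ^ (-(p.length : ℝ) / T)) hcover hsum
  exact tendsto_weighted_average_atTop (tendsto_natCast_atTop_atTop.comp hlen)
    (fun _ => Nat.cast_nonneg _) (fun _ => by positivity) hdiv

/-- **Theorem (paper Thm 10(ii)).** For real `T ≥ 1` and any enumeration
`q₁, q₂, …` of `dom U`, the finite-stage energies
`E_n(T) = (∑_{i=1}^n |q_i|·2^{-|q_i|/T}) / (∑_{i=1}^n 2^{-|q_i|/T})`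
diverge to infinity as `n → ∞`. -/
theorem finite_stage_energy_tendsto_atTop (U : Computer) (hU : IsOptimal U)
    (T : ℝ) (hT : 1 ≤ T)
    (q : ℕ → List Bool) (hmem : ∀ n, q n ∈ U.domain)
    (hinj : Function.Injective q) (hsurj : ∀ p ∈ U.domain, ∃ n, q n = p) :
    Tendsto (fun n : ℕ =>
      (∑ i ∈ Finset.range n,
        ((q i).length : ℝ) * (2 : ℝ) ^ (-((q i).length : ℝ) / T)) /
      (∑ i ∈ Finset.range n, (2 : ℝ) ^ (-((q i).length : ℝ) / T)))
      atTop atTop := by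
  exact finite_stage_energy_tendsto_atTop_general hU hT
    (tendsto_list_length_cofinite.comp (Nat.cofinite_eq_atTop ▸ hinj.tendsto_cofinite)) hsurj
end
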